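/- arXiv:1610.04738 — 5 statements merged into one kernel-verified Lean document; each statement's English description precedes it below -/
import Mathlib

section
/- Let p > 2, let N ≥ 1 be an integer, and let q > p (the Sobolev-supercritical range q ≥ Np/(N−p) when p < N is allowed). Then there exists a nonconstant radial profile solution of the Neumann problem −Δ_p u + u^{p−1} = u^{q−1} in the unit ball of ℝ^N: a function u ∈ C^1([0,1]) with u(r) > 0 for all r ∈ [0,1], u nondecreasing, u not constant, u'(0) = u'(1) = 0, and such that r ↦ r^{N−1}|u'(r)|^{p−2}u'(r) is differentiable on (0,1) with derivative r^{N−1}(u(r)^{p−1} − u(r)^{q−1}) for every r ∈ (0,1). -/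
open Real Filter Set

noncomputable def flux (p : ℝ) (N : ℕ) (u' : ℝ → ℝ) (s : ℝ) : ℝ :=
  s ^ (N - 1) * (|u' s| ^ (p - 2) * u' s)

def IsRadialNeumannSolution (p : ℝ) (N : ℕ) (f : ℝ → ℝ) (u u' : ℝ → ℝ) : Prop :=
  (∀ r ∈ Set.Icc (0:ℝ) 1, HasDerivWithinAt u (u' r) (Set.Icc 0 1) r) ∧
  ContinuousOn u' (Set.Icc 0 1) ∧
  u' 0 = 0 ∧ u' 1 = 0 ∧
  ∀ r ∈ Set.Ioo (0:ℝ) 1,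
    HasDerivAt (flux p N u') (r ^ (N - 1) * ((u r) ^ (p - 1) - f (u r))) r

/-!
Shooting from `u 0 = a ∈ (0, 1)`: with the slope written as the root of exponent `(p - 1)⁻¹` of the
flux density, every solution of the initial value problem is nondecreasing, and it solves the
Neumann problem as soon as its flux at radius `1` vanishes. For `a ≤ e⁻¹` Grönwall's inequality
keeps `u` below the equilibrium `1`, so the final flux is positive. For `a` close to `1` it is
negative: as `(p - 1)⁻¹ < 1`, a small flux produces a much larger displacement from the equilibrium,
which the reaction turns back into too large a flux.

The root is not Lipschitz at `0`, so the initial value problem may have several solutions and its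
final flux need not be a function of `a`. The intermediate value theorem is therefore applied to
Tonelli's delayed approximations, which depend continuously on `a`, and an Arzelà–Ascoli argument
removes the delay.
-/

open Topology BoundedContinuousFunction
open scoped NNReal

section IntegralOperators

variable {X : Type*} [TopologicalSpace X] {g ψ : ℝ → ℝ} {m : ℕ} {v w : ℝ → ℝ} {a r R : ℝ}

/-- The flux `r ^ m * |u'| ^ (p - 2) * u'` of the radial `p`-Laplacian that a profile `v` with
reaction term `g` has accumulated at radius `r`; here `m = N - 1`. -/
noncomputable def cumulativeFlux (g : ℝ → ℝ) (m : ℕ) (v : ℝ → ℝ) (r : ℝ) : ℝ :=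
  ∫ t in (0 : ℝ)..r, t ^ m * g (v t)

/-- The quotient of `cumulativeFlux` by `r ^ m`, rescaled to the unit interval so that no division
is needed and the expression is continuous up to `r = 0`. -/
noncomputable def fluxDensity (g : ℝ → ℝ) (m : ℕ) (v : ℝ → ℝ) (r : ℝ) : ℝ :=
  r * ∫ t in (0 : ℝ)..1, t ^ m * g (v (r * t))

/-- The integral operator whose fixed points are the solutions of the radial initial value problem
with `u 0 = a`; the slope law `ψ` recovers `u'` from the flux density. -/
noncomputable def shootingMap (g ψ : ℝ → ℝ) (m : ℕ) (a : ℝ) (v : ℝ → ℝ) (r : ℝ) : ℝ :=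
  a + ∫ s in (0 : ℝ)..r, ψ (fluxDensity g m v s)

lemma cumulativeFlux_zero : cumulativeFlux g m v 0 = 0 := intervalIntegral.integral_same

lemma fluxDensity_zero : fluxDensity g m v 0 = 0 := zero_mul _

lemma shootingMap_zero : shootingMap g ψ m a v 0 = a := by
  simp only [shootingMap, intervalIntegral.integral_same, add_zero]

lemma pow_mul_fluxDensity (g : ℝ → ℝ) (m : ℕ) (v : ℝ → ℝ) (r : ℝ) :
    r ^ m * fluxDensity g m v r = cumulativeFlux g m v r := by
  have rescale := intervalIntegral.mul_integral_comp_mul_left (a := 0) (b := 1)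
    (f := fun t => t ^ m * g (v t)) r
  simp only [mul_zero, mul_one, mul_pow, mul_assoc, intervalIntegral.integral_const_mul] at rescale
  rw [fluxDensity, cumulativeFlux, ← rescale, mul_left_comm]

lemma cumulativeFlux_one : cumulativeFlux g m v 1 = fluxDensity g m v 1 := by
  rw [← pow_mul_fluxDensity, one_pow, one_mul]

lemma fluxDensity_congr (h : EqOn v w (Icc 0 R)) (hr : r ∈ Icc 0 R) :
    fluxDensity g m v r = fluxDensity g m w r := by
  refine congrArg (r * ·) (intervalIntegral.integral_congr fun t ht => ?_)
  rw [uIcc_of_le zero_le_one] at ht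
  have hrt : r * t ∈ Icc 0 R :=
    ⟨mul_nonneg hr.1 ht.1, (mul_le_of_le_one_right hr.1 ht.2).trans hr.2⟩
  simp only [h hrt]

lemma shootingMap_congr (h : EqOn v w (Icc 0 R)) (hr : r ∈ Icc 0 R) :
    shootingMap g ψ m a v r = shootingMap g ψ m a w r := by
  refine congrArg (a + ·) (intervalIntegral.integral_congr fun s hs => ?_)
  rw [uIcc_of_le hr.1] at hs
  simp only [fluxDensity_congr h ⟨hs.1, hs.2.trans hr.2⟩]

lemma continuous_fluxDensity_parametric {V : X → ℝ → ℝ} {ρ : X → ℝ} (hg : Continuous g)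
    (hV : Continuous (Function.uncurry V)) (hρ : Continuous ρ) :
    Continuous fun x => fluxDensity g m (V x) (ρ x) := by
  refine hρ.mul (intervalIntegral.continuous_parametric_intervalIntegral_of_continuous'
    (f := fun x t => t ^ m * g (V x (ρ x * t))) ?_ 0 1)
  have inner : Continuous fun y : X × ℝ => V y.1 (ρ y.1 * y.2) :=
    hV.comp (continuous_fst.prodMk ((hρ.comp continuous_fst).mul continuous_snd))
  exact (continuous_snd.pow m).mul (hg.comp inner)

lemma continuous_shootingMap_parametric {V : X → ℝ → ℝ} {α ρ : X → ℝ} (hg : Continuous g)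
    (hψ : Continuous ψ) (hV : Continuous (Function.uncurry V)) (hα : Continuous α)
    (hρ : Continuous ρ) : Continuous fun x => shootingMap g ψ m (α x) (V x) (ρ x) := by
  have hV' : Continuous (Function.uncurry fun y : X × ℝ => V y.1) :=
    hV.comp ((continuous_fst.comp continuous_fst).prodMk continuous_snd)
  exact hα.add (intervalIntegral.continuous_parametric_intervalIntegral_of_continuous
    (f := fun x s => ψ (fluxDensity g m (V x) s))
    (hψ.comp (continuous_fluxDensity_parametric hg hV' continuous_snd)) hρ)

lemma continuous_fluxDensity (hg : Continuous g) (hv : Continuous v) :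
    Continuous (fluxDensity g m v) :=
  continuous_fluxDensity_parametric (V := fun _ => v) hg (hv.comp continuous_snd) continuous_id

lemma hasDerivAt_shootingMap (hg : Continuous g) (hψ : Continuous ψ) (hv : Continuous v) (r : ℝ) :
    HasDerivAt (shootingMap g ψ m a v) (ψ (fluxDensity g m v r)) r :=
  ((hψ.comp (continuous_fluxDensity hg hv)).integral_hasStrictDerivAt 0 r).hasDerivAt.const_add a

lemma hasDerivAt_cumulativeFlux (hg : Continuous g) (hv : Continuous v) (r : ℝ) :
    HasDerivAt (cumulativeFlux g m v) (r ^ m * g (v r)) r :=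
  (((continuous_id.pow m).mul (hg.comp hv)).integral_hasStrictDerivAt 0 r).hasDerivAt

lemma lipschitzWith_shootingMap {L : ℝ≥0} (hg : Continuous g) (hψ : Continuous ψ)
    (hL : ∀ x, |ψ x| ≤ L) (hv : Continuous v) : LipschitzWith L (shootingMap g ψ m a v) :=
  lipschitzWith_of_nnnorm_deriv_le
    (fun r => (hasDerivAt_shootingMap hg hψ hv r).differentiableAt)
    fun r => by rw [(hasDerivAt_shootingMap hg hψ hv r).deriv]; exact hL _

end IntegralOperators

section DelayedSolutions

variable {g ψ : ℝ → ℝ} {m : ℕ} {v w : ℝ → ℝ} {a h : ℝ}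

/-- A solution of the radial initial value problem `u 0 = a` on `[0, 1]`, in integrated form. -/
structure IsShootingSolution (g ψ : ℝ → ℝ) (m : ℕ) (a : ℝ) (v : ℝ → ℝ) : Prop where
  continuous : Continuous v
  eq : ∀ r ∈ Icc (0 : ℝ) 1, v r = shootingMap g ψ m a v r

/-- Tonelli's approximation of `IsShootingSolution`: the profile at radius `r` is computed from
its values on `[0, r - h]`, which makes it unique and continuous in `a` for `h > 0`. -/
structure IsDelayedSolution (g ψ : ℝ → ℝ) (m : ℕ) (h a : ℝ) (v : ℝ → ℝ) : Prop where
  continuous : Continuous v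
  eq : ∀ r ∈ Icc (0 : ℝ) 1, v r = shootingMap g ψ m a v (max (r - h) 0)

/-- Successive approximations of the delayed solution starting at `a`; the `k`-th one is exact up
to radius `k * h`. -/
noncomputable def delayedIterate (g ψ : ℝ → ℝ) (m : ℕ) (h : ℝ) : ℕ → ℝ → ℝ → ℝ
  | 0 => fun a _ => a
  | k + 1 => fun a r => shootingMap g ψ m a (delayedIterate g ψ m h k a) (max (r - h) 0)

lemma continuous_uncurry_delayedIterate (hg : Continuous g) (hψ : Continuous ψ) (h : ℝ) (k : ℕ) :
    Continuous (Function.uncurry (delayedIterate g ψ m h k)) := by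
  induction k with
  | zero => exact continuous_fst
  | succ k ih =>
    exact continuous_shootingMap_parametric hg hψ
      (V := fun y : ℝ × ℝ => delayedIterate g ψ m h k y.1)
      (ih.comp ((continuous_fst.comp continuous_fst).prodMk continuous_snd))
      continuous_fst ((continuous_snd.sub continuous_const).max continuous_const)

lemma delayedIterate_succ_eq (hh : 0 ≤ h) (k : ℕ) :
    ∀ r ≤ k * h, delayedIterate g ψ m h (k + 1) a r = delayedIterate g ψ m h k a r := by
  induction k with
  | zero =>
    intro r hr
    have hrh : max (r - h) 0 = 0 := max_eq_right (by simp only [Nat.cast_zero] at hr; linarith)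
    simp only [delayedIterate, hrh, shootingMap_zero]
  | succ k ih =>
    intro r hr
    have hkh : 0 ≤ k * h := by positivity
    have hrh : max (r - h) 0 ≤ k * h := max_le (by push_cast at hr; linarith) hkh
    exact shootingMap_congr (fun t ht => ih t ht.2) ⟨le_max_right _ _, hrh⟩

lemma exists_continuous_isDelayedSolution (hg : Continuous g) (hψ : Continuous ψ) (m : ℕ)
    (hh : 0 < h) : ∃ V : ℝ → ℝ → ℝ, Continuous (Function.uncurry V) ∧
      ∀ a, IsDelayedSolution g ψ m h a (V a) := by
  obtain ⟨k, hk⟩ := exists_nat_ge h⁻¹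
  have hkh : 1 ≤ k * h := by rwa [inv_le_iff_one_le_mul₀ hh] at hk
  have hcont := continuous_uncurry_delayedIterate (m := m) hg hψ h k
  exact ⟨delayedIterate g ψ m h k, hcont, fun a => ⟨hcont.uncurry_left a, fun r hr =>
    (delayedIterate_succ_eq hh.le k r (hr.2.trans hkh)).symm⟩⟩

namespace IsDelayedSolution

lemma isShootingSolution (hv : IsDelayedSolution g ψ m 0 a v) : IsShootingSolution g ψ m a v :=
  ⟨hv.continuous, fun r hr => by rw [hv.eq r hr, sub_zero, max_eq_left hr.1]⟩

lemma apply_zero (hv : IsDelayedSolution g ψ m h a v) (hh : 0 ≤ h) : v 0 = a := by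
  rw [hv.eq 0 ⟨le_rfl, zero_le_one⟩, zero_sub, max_eq_right (neg_nonpos.2 hh), shootingMap_zero]

lemma lipschitzOnWith {L : ℝ≥0} (hv : IsDelayedSolution g ψ m h a v) (hg : Continuous g)
    (hψ : Continuous ψ) (hL : ∀ x, |ψ x| ≤ L) : LipschitzOnWith L v (Icc 0 1) := by
  have delay : LipschitzWith 1 fun r : ℝ => max (r - h) 0 :=
    (IsometryEquiv.subRight h).isometry.lipschitz.max_const 0
  have key := (lipschitzWith_shootingMap (a := a) (m := m) hg hψ hL hv.continuous).comp delay
  rw [mul_one] at key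
  exact fun x hx y hy => by rw [hv.eq x hx, hv.eq y hy]; exact key x y

lemma congr (hv : IsDelayedSolution g ψ m h a v) (hh : 0 ≤ h) (hw : Continuous w)
    (hvw : EqOn v w (Icc 0 1)) : IsDelayedSolution g ψ m h a w := by
  refine ⟨hw, fun r hr => ?_⟩
  rw [← hvw hr, hv.eq r hr]
  exact shootingMap_congr hvw
    ⟨le_max_right _ _, max_le ((sub_le_self r hh).trans hr.2) zero_le_one⟩

end IsDelayedSolution

end DelayedSolutions

section Shooting

variable {g ψ : ℝ → ℝ} {m : ℕ} {a₀ a₁ : ℝ} {L : ℝ≥0} {K U : Set ℝ}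

lemma isCompact_setOf_lipschitzWith_apply_mem {X Y : Type*} [PseudoMetricSpace X] [CompactSpace X]
    [MetricSpace Y] [ProperSpace Y] (L : ℝ≥0) (x₀ : X) {K : Set Y} (hK : IsCompact K) :
    IsCompact {f : X →ᵇ Y | LipschitzWith L f ∧ f x₀ ∈ K} := by
  refine arzela_ascoli₂ _ (hK.cthickening (r := L * Metric.diam (univ : Set X))) _ ?_ ?_ ?_
  · have closed_lipschitz : IsClosed {f : X →ᵇ Y | LipschitzWith L f} :=
      (isClosed_setOfPred_lipschitzWith (α := X) (β := Y) L).preimage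
        (continuous_coe (α := X) (β := Y))
    exact closed_lipschitz.inter (hK.isClosed.preimage (continuous_eval_const x₀))
  · rintro f x ⟨hf, hfx₀⟩
    refine Metric.mem_cthickening_of_dist_le _ _ _ _ hfx₀ ((hf.dist_le_mul x x₀).trans ?_)
    gcongr
    exact Metric.dist_le_diam_of_mem isCompact_univ.isBounded (mem_univ x) (mem_univ x₀)
  · exact (LipschitzWith.uniformEquicontinuous _ L fun f => f.2.1).equicontinuous

/-- The continuous extension to `ℝ` of a profile on `[0, 1]`; the compactness argument takes place
in the space `Icc 0 1 →ᵇ ℝ`, whereas the integral operators act on functions on `ℝ`. -/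
noncomputable def extendProfile (f : Icc (0 : ℝ) 1 →ᵇ ℝ) : ℝ → ℝ := IccExtend zero_le_one f

lemma continuous_uncurry_extendProfile : Continuous (Function.uncurry extendProfile) :=
  continuous_eval.comp (continuous_fst.prodMk
    ((continuous_projIcc (h := zero_le_one)).comp continuous_snd))

lemma eventually_extendProfile_fluxDensity_mem (hg : Continuous g) (hψ : Continuous ψ)
    (hU : IsOpen U) (f : Icc (0 : ℝ) 1 →ᵇ ℝ)
    (hf : IsShootingSolution g ψ m (f 0) (extendProfile f) →
      fluxDensity g m (extendProfile f) 1 ∈ U) :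
    ∀ᶠ z : ℝ × (Icc (0 : ℝ) 1 →ᵇ ℝ) in 𝓝 (0, f),
      IsDelayedSolution g ψ m z.1 (z.2 0) (extendProfile z.2) →
        fluxDensity g m (extendProfile z.2) 1 ∈ U := by
  have hV : Continuous (Function.uncurry fun z : ℝ × (Icc (0 : ℝ) 1 →ᵇ ℝ) => extendProfile z.2) :=
    continuous_uncurry_extendProfile.comp
      ((continuous_snd.comp continuous_fst).prodMk continuous_snd)
  by_cases hsol : IsDelayedSolution g ψ m 0 (f 0) (extendProfile f)
  · have hW := continuous_fluxDensity_parametric (m := m) hg hV (continuous_const (y := 1))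
    exact (hW.continuousAt.eventually_mem (hU.mem_nhds (hf hsol.isShootingSolution))).mono
      fun z hz _ => hz
  · have hcont : Continuous (extendProfile f) := continuous_uncurry_extendProfile.uncurry_left f
    obtain ⟨r, hr, hne⟩ : ∃ r ∈ Icc (0 : ℝ) 1, extendProfile f r ≠
        shootingMap g ψ m (f 0) (extendProfile f) (max (r - 0) 0) := by
      by_contra! h
      exact hsol ⟨hcont, h⟩
    have hlhs : Continuous fun z : ℝ × (Icc (0 : ℝ) 1 →ᵇ ℝ) => extendProfile z.2 r :=
      hV.uncurry_right r
    have hrhs : Continuous fun z : ℝ × (Icc (0 : ℝ) 1 →ᵇ ℝ) =>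
        shootingMap g ψ m (z.2 0) (extendProfile z.2) (max (r - z.1) 0) :=
      continuous_shootingMap_parametric hg hψ hV
        ((continuous_eval_const (0 : Icc (0 : ℝ) 1)).comp continuous_snd)
        ((continuous_const.sub continuous_fst).max continuous_const)
    filter_upwards [(isOpen_ne_fun hlhs hrhs).mem_nhds hne] with z hz hzsol
    exact absurd (hzsol.eq r hr) hz

lemma eventually_isDelayedSolution_fluxDensity_mem (hg : Continuous g) (hψ : Continuous ψ)
    (hL : ∀ x, |ψ x| ≤ L) (hK : IsCompact K) (hU : IsOpen U)
    (hKU : ∀ a ∈ K, ∀ v, IsShootingSolution g ψ m a v → fluxDensity g m v 1 ∈ U) :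
    ∀ᶠ h in 𝓝[>] 0, ∀ a ∈ K, ∀ v, IsDelayedSolution g ψ m h a v → fluxDensity g m v 1 ∈ U := by
  have profiles := (isCompact_setOf_lipschitzWith_apply_mem L (0 : Icc (0 : ℝ) 1)
    hK).eventually_forall_of_forall_eventually (x₀ := (0 : ℝ))
    (P := fun h f => IsDelayedSolution g ψ m h (f 0) (extendProfile f) →
      fluxDensity g m (extendProfile f) 1 ∈ U) fun f hf =>
      eventually_extendProfile_fluxDensity_mem (m := m) hg hψ hU f (hKU _ hf.2 _)
  filter_upwards [profiles.filter_mono nhdsWithin_le_nhds, self_mem_nhdsWithin]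
    with h hprofiles (hh : 0 < h) a ha v hv
  let f : Icc (0 : ℝ) 1 →ᵇ ℝ :=
    mkOfCompact ⟨fun r => v r, hv.continuous.comp continuous_subtype_val⟩
  have hvf : EqOn v (extendProfile f) (Icc 0 1) := fun r hr =>
    (IccExtend_of_mem zero_le_one f hr).symm
  have hf₀ : f 0 = a := hv.apply_zero hh.le
  have hfL : LipschitzWith L f := (hv.lipschitzOnWith hg hψ hL).to_restrict
  have hfsol : IsDelayedSolution g ψ m h a (extendProfile f) :=
    hv.congr hh.le (continuous_uncurry_extendProfile.uncurry_left f) hvf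
  rw [fluxDensity_congr hvf ⟨zero_le_one, le_rfl⟩]
  rw [← hf₀] at ha hfsol
  exact hprofiles f ⟨hfL, ha⟩ hfsol

theorem exists_isShootingSolution_fluxDensity_eq_zero (hg : Continuous g) (hψ : Continuous ψ)
    (hL : ∀ x, |ψ x| ≤ L) (ha : a₀ ≤ a₁)
    (hpos : ∀ v, IsShootingSolution g ψ m a₀ v → 0 < fluxDensity g m v 1)
    (hneg : ∀ v, IsShootingSolution g ψ m a₁ v → fluxDensity g m v 1 < 0) :
    ∃ a ∈ Icc a₀ a₁, ∃ v, IsShootingSolution g ψ m a v ∧ fluxDensity g m v 1 = 0 := by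
  by_contra! hne
  have delayed {K U : Set ℝ} (hK : IsCompact K) (hU : IsOpen U) :=
    eventually_isDelayedSolution_fluxDensity_mem (m := m) hg hψ hL hK hU
  have hpos' := delayed isCompact_singleton isOpen_Ioi (forall_eq.2 hpos)
  have hneg' := delayed isCompact_singleton isOpen_Iio (forall_eq.2 hneg)
  have hne' := delayed isCompact_Icc isOpen_ne hne
  obtain ⟨h, hpos_h, hneg_h, hne_h, hh⟩ :=
    (hpos'.and (hneg'.and (hne'.and self_mem_nhdsWithin))).exists
  obtain ⟨V, hV, hVsol⟩ := exists_continuous_isDelayedSolution hg hψ m hh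
  have hW : Continuous fun a => fluxDensity g m (V a) 1 :=
    continuous_fluxDensity_parametric hg hV continuous_const
  obtain ⟨a, haI, hza⟩ := intermediate_value_Icc' ha hW.continuousOn
    ⟨(hneg_h a₁ rfl _ (hVsol a₁)).le, (hpos_h a₀ rfl _ (hVsol a₀)).le⟩
  exact hne_h a haI _ (hVsol a) hza

end Shooting

section MeanValue

variable {f f' : ℝ → ℝ} {x y C : ℝ}

lemma mul_sub_le_sub_of_le_hasDerivAt (hf : ∀ t ∈ Icc x y, HasDerivAt f (f' t) t) (hxy : x ≤ y)
    (hC : ∀ t ∈ Icc x y, C ≤ f' t) : C * (y - x) ≤ f y - f x :=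
  (convex_Icc x y).mul_sub_le_image_sub_of_le_deriv (HasDerivAt.continuousOn hf)
    (fun t ht => (hf t (interior_subset ht)).differentiableAt.differentiableWithinAt)
    (fun t ht => (hf t (interior_subset ht)).deriv.symm ▸ hC t (interior_subset ht))
    x (left_mem_Icc.2 hxy) y (right_mem_Icc.2 hxy) hxy

lemma sub_le_mul_sub_of_hasDerivAt_le (hf : ∀ t ∈ Icc x y, HasDerivAt f (f' t) t) (hxy : x ≤ y)
    (hC : ∀ t ∈ Icc x y, f' t ≤ C) : f y - f x ≤ C * (y - x) := by
  have := mul_sub_le_sub_of_le_hasDerivAt (f := -f) (fun t ht => (hf t ht).neg) hxy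
    (C := -C) fun t ht => neg_le_neg (hC t ht)
  simp only [Pi.neg_apply] at this
  linarith

end MeanValue

section FluxComparison

variable {g : ℝ → ℝ} {m : ℕ} {v : ℝ → ℝ} {r C : ℝ}

lemma fluxDensity_le (hg : Continuous g) (hv : Continuous v) (hC : 0 ≤ C) (hr : r ∈ Icc (0 : ℝ) 1)
    (hgC : ∀ t ∈ Icc 0 r, g (v t) ≤ C) : fluxDensity g m v r ≤ C := by
  have integrand_le : ∀ t ∈ Icc (0 : ℝ) 1, t ^ m * g (v (r * t)) ≤ C := fun t ht =>
    calc t ^ m * g (v (r * t)) ≤ t ^ m * C := by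
          gcongr
          · exact pow_nonneg ht.1 m
          · exact hgC _ ⟨mul_nonneg hr.1 ht.1, mul_le_of_le_one_right hr.1 ht.2⟩
      _ ≤ C := mul_le_of_le_one_left hC (pow_le_one₀ ht.1 ht.2)
  have integral_le : ∫ t in (0 : ℝ)..1, t ^ m * g (v (r * t)) ≤ C := by
    have hcont : Continuous fun t : ℝ => t ^ m * g (v (r * t)) := by fun_prop
    simpa using intervalIntegral.integral_mono_on (μ := MeasureTheory.volume) zero_le_one
      (hcont.intervalIntegrable 0 1) intervalIntegrable_const integrand_le
  exact (mul_le_mul_of_nonneg_left integral_le hr.1).trans (mul_le_of_le_one_left hC hr.2)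

lemma fluxDensity_nonneg (hr : 0 < r) (hP : 0 ≤ cumulativeFlux g m v r) :
    0 ≤ fluxDensity g m v r := by
  rw [← pow_mul_fluxDensity] at hP
  exact nonneg_of_mul_nonneg_right hP (pow_pos hr m)

lemma cumulativeFlux_le_fluxDensity (hr : r ∈ Ioc (0 : ℝ) 1) (hP : 0 ≤ cumulativeFlux g m v r) :
    cumulativeFlux g m v r ≤ fluxDensity g m v r := by
  rw [← pow_mul_fluxDensity]
  exact mul_le_of_le_one_left (fluxDensity_nonneg hr.1 hP) (pow_le_one₀ hr.1.le hr.2)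

end FluxComparison

/-- A bounded nondecreasing law giving the slope of a profile in terms of its flux density. -/
structure IsSlopeLaw (ψ : ℝ → ℝ) : Prop where
  continuous : Continuous ψ
  monotone : Monotone ψ
  nonneg : ∀ x, 0 ≤ ψ x
  le_one : ∀ x, ψ x ≤ 1

lemma IsSlopeLaw.abs_le_one {ψ : ℝ → ℝ} (hψ : IsSlopeLaw ψ) (x : ℝ) : |ψ x| ≤ (1 : ℝ≥0) := by
  rw [abs_of_nonneg (hψ.nonneg x)]
  exact hψ.le_one x

/-- A reaction term `g` that pushes the flux up below the equilibrium `1` and down above it, and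
crosses zero transversally there. For the problem `-Δ_p u + u ^ (p - 1) = f u` the reaction term is
`g s = s ^ (p - 1) - f s`. -/
structure IsMonostable (g : ℝ → ℝ) : Prop where
  continuous : Continuous g
  map_one : g 1 = 0
  pos : ∀ x, 0 < x → x < 1 → 0 < g x
  neg : ∀ x, 1 < x → g x < 0
  deriv_neg : deriv g 1 < 0

namespace IsMonostable

variable {g : ℝ → ℝ} {x : ℝ}

lemma nonneg (hg : IsMonostable g) (hx : 0 < x) (hx1 : x ≤ 1) : 0 ≤ g x := by
  rcases hx1.eq_or_lt with rfl | hlt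
  exacts [hg.map_one.ge, (hg.pos x hx hlt).le]

lemma nonpos (hg : IsMonostable g) (hx : 1 ≤ x) : g x ≤ 0 := by
  rcases hx.eq_or_lt with rfl | hlt
  exacts [hg.map_one.le, (hg.neg x hlt).le]

lemma dslope_one_neg (hg : IsMonostable g) (hx : 0 < x) : dslope g 1 x < 0 := by
  rcases lt_trichotomy x 1 with hlt | rfl | hgt
  · rw [dslope_of_ne _ hlt.ne, slope_def_field, hg.map_one, sub_zero]
    exact div_neg_of_pos_of_neg (hg.pos x hx hlt) (sub_neg.2 hlt)
  · rw [dslope_same]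
    exact hg.deriv_neg
  · rw [dslope_of_ne _ hgt.ne', slope_def_field, hg.map_one, sub_zero]
    exact div_neg_of_neg_of_pos (hg.neg x hgt) (sub_pos.2 hgt)

lemma exists_linear_bound (hg : IsMonostable g) {K : Set ℝ} (hK : IsCompact K) (hK₀ : K ⊆ Ioi 0) :
    ∃ c > 0, ∀ x ∈ K, (x ≤ 1 → c * (1 - x) ≤ g x) ∧ (1 ≤ x → g x ≤ -(c * (x - 1))) := by
  have hdiff : DifferentiableAt ℝ g 1 := differentiableAt_of_deriv_ne_zero hg.deriv_neg.ne
  have hcont : ContinuousOn (dslope g 1) (Ioi 0) :=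
    (continuousOn_dslope (Ioi_mem_nhds one_pos)).2 ⟨hg.continuous.continuousOn, hdiff⟩
  obtain ⟨c, hc, hcK⟩ := hK.exists_forall_le' (hcont.mono hK₀).neg (a := 0)
    fun x hx => neg_pos.2 (hg.dslope_one_neg (hK₀ hx))
  refine ⟨c, hc, fun x hx => ?_⟩
  have hslope : c ≤ -dslope g 1 x := hcK x hx
  have hgx : g x = (x - 1) * dslope g 1 x := by
    rw [← smul_eq_mul, sub_smul_dslope, hg.map_one, sub_zero]
  exact ⟨fun hx1 => by nlinarith, fun hx1 => by nlinarith⟩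

lemma le_one (hg : IsMonostable g) {β : ℝ} (hgβ : ∀ x, 0 ≤ x → g x ≤ x ^ β) (hβ : 0 ≤ β)
    (hx : 0 ≤ x) : g x ≤ 1 := by
  rcases le_total x 1 with hx1 | hx1
  · exact (hgβ x hx).trans (rpow_le_one hx hx1 hβ)
  · exact (hg.nonpos hx1).trans zero_le_one

end IsMonostable

namespace IsShootingSolution

variable {g ψ : ℝ → ℝ} {m : ℕ} {v : ℝ → ℝ} {a r x y C : ℝ}

lemma apply_zero (hv : IsShootingSolution g ψ m a v) : v 0 = a := by
  rw [hv.eq 0 ⟨le_rfl, zero_le_one⟩, shootingMap_zero]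

lemma mul_sub_le_sub (hv : IsShootingSolution g ψ m a v) (hg : Continuous g) (hψ : Continuous ψ)
    (hx : 0 ≤ x) (hxy : x ≤ y) (hy : y ≤ 1) (hC : ∀ t ∈ Icc x y, C ≤ ψ (fluxDensity g m v t)) :
    C * (y - x) ≤ v y - v x := by
  rw [hv.eq x ⟨hx, hxy.trans hy⟩, hv.eq y ⟨hx.trans hxy, hy⟩]
  exact mul_sub_le_sub_of_le_hasDerivAt
    (fun t _ => hasDerivAt_shootingMap hg hψ hv.continuous t) hxy hC

lemma monotoneOn (hv : IsShootingSolution g ψ m a v) (hg : Continuous g) (hψ : IsSlopeLaw ψ) :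
    MonotoneOn v (Icc 0 1) := fun x hx y hy hxy => by
  have := hv.mul_sub_le_sub hg hψ.continuous hx.1 hxy hy.2 fun t _ => hψ.nonneg _
  linarith

lemma le_apply (hv : IsShootingSolution g ψ m a v) (hg : Continuous g) (hψ : IsSlopeLaw ψ)
    (hr : r ∈ Icc (0 : ℝ) 1) : a ≤ v r := by
  rw [← hv.apply_zero]
  exact hv.monotoneOn hg hψ ⟨le_rfl, zero_le_one⟩ hr hr.1

lemma apply_le (hv : IsShootingSolution g ψ m a v) (hg : Continuous g) (hψ : IsSlopeLaw ψ)
    (hr : r ∈ Icc (0 : ℝ) 1) : v r ≤ a + 1 := by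
  have hslope := sub_le_mul_sub_of_hasDerivAt_le
    (fun t _ => hasDerivAt_shootingMap (m := m) (a := a) hg hψ.continuous hv.continuous t)
    hr.1 fun t _ => hψ.le_one _
  rw [shootingMap_zero, ← hv.eq r hr] at hslope
  linarith [hr.2]

lemma cumulativeFlux_monotoneOn (hv : IsShootingSolution g ψ m a v) (hg : IsMonostable g)
    (hψ : IsSlopeLaw ψ) (ha : 0 < a) (hr : r ∈ Icc (0 : ℝ) 1) (hvr : v r ≤ 1) :
    MonotoneOn (cumulativeFlux g m v) (Icc 0 r) := fun x hx y hy hxy => by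
  have hslope := mul_sub_le_sub_of_le_hasDerivAt (C := 0)
    (fun t _ => hasDerivAt_cumulativeFlux (m := m) hg.continuous hv.continuous t) hxy
    fun t ht => by
      have htI : t ∈ Icc (0 : ℝ) 1 := ⟨hx.1.trans ht.1, (ht.2.trans hy.2).trans hr.2⟩
      have hvt : v t ≤ 1 := (hv.monotoneOn hg.continuous hψ htI hr (ht.2.trans hy.2)).trans hvr
      exact mul_nonneg (pow_nonneg htI.1 m)
        (hg.nonneg (ha.trans_le (hv.le_apply hg.continuous hψ htI)) hvt)
  linarith

lemma cumulativeFlux_antitoneOn (hv : IsShootingSolution g ψ m a v) (hg : IsMonostable g)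
    (hψ : IsSlopeLaw ψ) (hr : r ∈ Icc (0 : ℝ) 1) (hvr : 1 ≤ v r) :
    AntitoneOn (cumulativeFlux g m v) (Icc r 1) := fun x hx y hy hxy => by
  have hslope := sub_le_mul_sub_of_hasDerivAt_le (C := 0)
    (fun t _ => hasDerivAt_cumulativeFlux (m := m) hg.continuous hv.continuous t) hxy
    fun t ht => by
      have hrt : r ≤ t := hx.1.trans ht.1
      have htI : t ∈ Icc (0 : ℝ) 1 := ⟨hr.1.trans hrt, ht.2.trans hy.2⟩
      exact mul_nonpos_of_nonneg_of_nonpos (pow_nonneg htI.1 m)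
        (hg.nonpos (hvr.trans (hv.monotoneOn hg.continuous hψ hr htI hrt)))
  linarith

lemma cumulativeFlux_nonneg (hv : IsShootingSolution g ψ m a v) (hg : IsMonostable g)
    (hψ : IsSlopeLaw ψ) (ha : 0 < a) (h1 : 0 ≤ cumulativeFlux g m v 1) (hr : r ∈ Icc (0 : ℝ) 1) :
    0 ≤ cumulativeFlux g m v r := by
  rcases le_total (v r) 1 with hvr | hvr
  · rw [← cumulativeFlux_zero (g := g) (m := m) (v := v)]
    exact hv.cumulativeFlux_monotoneOn hg hψ ha hr hvr
      (left_mem_Icc.2 hr.1) (right_mem_Icc.2 hr.1) hr.1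
  · exact h1.trans (hv.cumulativeFlux_antitoneOn hg hψ hr hvr
      (left_mem_Icc.2 hr.2) (right_mem_Icc.2 hr.2) hr.2)

lemma fluxDensity_mem_Icc (hv : IsShootingSolution g ψ m a v) (hg : IsMonostable g)
    (hψ : IsSlopeLaw ψ) (hg₁ : ∀ x, 0 ≤ x → g x ≤ 1) (ha : 0 < a)
    (h1 : 0 ≤ cumulativeFlux g m v 1) (hr : r ∈ Ioc (0 : ℝ) 1) :
    fluxDensity g m v r ∈ Icc (0 : ℝ) 1 := by
  have hrI : r ∈ Icc (0 : ℝ) 1 := Ioc_subset_Icc_self hr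
  refine ⟨fluxDensity_nonneg hr.1 (hv.cumulativeFlux_nonneg hg hψ ha h1 hrI),
    fluxDensity_le hg.continuous hv.continuous zero_le_one hrI fun t ht => hg₁ _ ?_⟩
  exact ha.le.trans (hv.le_apply hg.continuous hψ ⟨ht.1, ht.2.trans hr.2⟩)

lemma cumulativeFlux_pos (hv : IsShootingSolution g ψ m a v) (hg : IsMonostable g)
    (hψ : IsSlopeLaw ψ) (ha : a ∈ Ioo (0 : ℝ) 1) (hr : r ∈ Ioc (0 : ℝ) 1) (hvr : v r ≤ 1) :
    0 < cumulativeFlux g m v r := by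
  have hIcc : Icc 0 r ⊆ Icc 0 1 := Icc_subset_Icc_right hr.2
  have apply_pos : ∀ t ∈ Icc 0 r, 0 < v t := fun t ht =>
    ha.1.trans_le (hv.le_apply hg.continuous hψ (hIcc ht))
  have apply_le_one : ∀ t ∈ Icc 0 r, v t ≤ 1 := fun t ht =>
    (hv.monotoneOn hg.continuous hψ (hIcc ht) (hIcc (right_mem_Icc.2 hr.1.le)) ht.2).trans hvr
  have below_near_zero : ∀ᶠ t in 𝓝[>] 0, v t < 1 :=
    (hv.continuous.continuousAt.eventually_lt_const (hv.apply_zero ▸ ha.2)).filter_mono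
      nhdsWithin_le_nhds
  obtain ⟨t, hvt, ht⟩ := (below_near_zero.and (Ioc_mem_nhdsGT hr.1)).exists
  have htI : t ∈ Icc 0 r := Ioc_subset_Icc_self ht
  have hcont : Continuous fun t => t ^ m * g (v t) :=
    (continuous_pow m).mul (hg.continuous.comp hv.continuous)
  exact intervalIntegral.integral_pos hr.1 hcont.continuousOn
    (fun s hs => have hsI := Ioc_subset_Icc_self hs
      mul_nonneg (pow_nonneg hsI.1 m) (hg.nonneg (apply_pos s hsI) (apply_le_one s hsI)))
    ⟨t, htI, mul_pos (pow_pos ht.1 m) (hg.pos _ (apply_pos t htI) hvt)⟩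

end IsShootingSolution

section NearEquilibrium

variable {g ψ : ℝ → ℝ} {m : ℕ} {v : ℝ → ℝ} {a c : ℝ}

/- If the final flux were nonnegative, the flux `z` at radius `1 / 4` (if `v (1 / 2) ≤ 1`) or
`3 / 4` (otherwise) would put the profile at distance at least `ψ z / 4` from the equilibrium on
one side of that radius, and the reaction there would force a flux of order `ψ z`, which is much
larger than `z`. -/
namespace IsShootingSolution

lemma mul_slope_le_cumulativeFlux_of_apply_half_le_one (hv : IsShootingSolution g ψ m a v)
    (hg : IsMonostable g) (hψ : IsSlopeLaw ψ) (ha : 1 / 2 ≤ a) (hc : 0 ≤ c)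
    (hgc : ∀ x ∈ Icc (1 / 2) 1, c * (1 - x) ≤ g x) (hhalf : v (1 / 2) ≤ 1) :
    (1 / 8) ^ m * c / 32 * ψ (cumulativeFlux g m v (1 / 4)) ≤ cumulativeFlux g m v (1 / 4) := by
  have ha₀ : 0 < a := by linarith
  set z := cumulativeFlux g m v (1 / 4)
  have hP := hv.cumulativeFlux_monotoneOn hg hψ ha₀ (by norm_num) hhalf
  have hP₀ : ∀ t ∈ Icc (0 : ℝ) (1 / 2), 0 ≤ cumulativeFlux g m v t := fun t ht =>
    cumulativeFlux_zero.ge.trans (hP (by norm_num) ht ht.1)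
  have rise : ψ z * (1 / 2 - 1 / 4) ≤ v (1 / 2) - v (1 / 4) := by
    refine hv.mul_sub_le_sub hg.continuous hψ.continuous (by norm_num) (by norm_num) (by norm_num)
      fun t ht => hψ.monotone ?_
    have htI : t ∈ Icc (0 : ℝ) (1 / 2) := ⟨by linarith [ht.1], ht.2⟩
    exact (hP (by norm_num) htI ht.1).trans
      (cumulativeFlux_le_fluxDensity ⟨by linarith [ht.1], by linarith [ht.2]⟩ (hP₀ t htI))
  have reaction : (1 / 8) ^ m * (c * (ψ z / 4)) * (1 / 4 - 1 / 8) ≤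
      z - cumulativeFlux g m v (1 / 8) := by
    refine mul_sub_le_sub_of_le_hasDerivAt
      (fun t _ => hasDerivAt_cumulativeFlux hg.continuous hv.continuous t) (by norm_num)
      fun t ht => ?_
    have htI : t ∈ Icc (0 : ℝ) 1 := ⟨by linarith [ht.1], by linarith [ht.2]⟩
    have hvt : v t ≤ v (1 / 4) := hv.monotoneOn hg.continuous hψ htI (by norm_num) ht.2
    have hat : a ≤ v t := hv.le_apply hg.continuous hψ htI
    have gap : ψ z / 4 ≤ 1 - v t := by linarith
    have hslope : 0 ≤ ψ z := hψ.nonneg z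
    have htm : 0 ≤ t ^ m := pow_nonneg htI.1 m
    calc (1 / 8) ^ m * (c * (ψ z / 4)) ≤ t ^ m * (c * (1 - v t)) := by
          gcongr
          exact ht.1
      _ ≤ t ^ m * g (v t) := by
          gcongr
          exact hgc _ ⟨by linarith, by linarith⟩
  linarith [hP₀ (1 / 8) (by norm_num)]

lemma mul_sub_one_le_cumulativeFlux (hv : IsShootingSolution g ψ m a v) (hg : IsMonostable g)
    (hψ : IsSlopeLaw ψ) (ha : a ≤ 1) (hc : 0 ≤ c) (hgc : ∀ x ∈ Icc 1 2, g x ≤ -(c * (x - 1)))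
    (h1 : 0 ≤ cumulativeFlux g m v 1) (hthree : 1 ≤ v (3 / 4)) :
    (1 / 8) ^ m * c / 4 * (v (3 / 4) - 1) ≤ cumulativeFlux g m v (3 / 4) := by
  have reaction : cumulativeFlux g m v 1 - cumulativeFlux g m v (3 / 4) ≤
      -((1 / 8) ^ m * (c * (v (3 / 4) - 1))) * (1 - 3 / 4) := by
    refine sub_le_mul_sub_of_hasDerivAt_le
      (fun t _ => hasDerivAt_cumulativeFlux hg.continuous hv.continuous t) (by norm_num)
      fun t ht => ?_
    have htI : t ∈ Icc (0 : ℝ) 1 := ⟨by linarith [ht.1], ht.2⟩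
    have hvt : v (3 / 4) ≤ v t := hv.monotoneOn hg.continuous hψ (by norm_num) htI ht.1
    have hat : v t ≤ a + 1 := hv.apply_le hg.continuous hψ htI
    have hgt : c * (v t - 1) ≤ -g (v t) := by
      linarith [hgc (v t) ⟨by linarith, by linarith⟩]
    have htm : 0 ≤ t ^ m := pow_nonneg htI.1 m
    rw [le_neg, ← mul_neg]
    calc (1 / 8) ^ m * (c * (v (3 / 4) - 1)) ≤ t ^ m * (c * (v t - 1)) := by
          gcongr
          linarith [ht.1]
      _ ≤ t ^ m * -g (v t) := by gcongr
  linarith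

lemma slope_le_apply_sub_one (hv : IsShootingSolution g ψ m a v) (hg : IsMonostable g)
    (hψ : IsSlopeLaw ψ) (ha : 0 < a) (h1 : 0 ≤ cumulativeFlux g m v 1) (hhalf : 1 ≤ v (1 / 2)) :
    ψ (cumulativeFlux g m v (3 / 4)) / 4 ≤ v (3 / 4) - 1 := by
  have rise : ψ (cumulativeFlux g m v (3 / 4)) * (3 / 4 - 1 / 2) ≤ v (3 / 4) - v (1 / 2) := by
    refine hv.mul_sub_le_sub hg.continuous hψ.continuous (by norm_num) (by norm_num) (by norm_num)
      fun t ht => hψ.monotone ?_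
    have htI : t ∈ Ioc (0 : ℝ) 1 := ⟨by linarith [ht.1], by linarith [ht.2]⟩
    exact (hv.cumulativeFlux_antitoneOn hg hψ (by norm_num) hhalf ⟨ht.1, htI.2⟩ (by norm_num)
      ht.2).trans (cumulativeFlux_le_fluxDensity htI
        (hv.cumulativeFlux_nonneg hg hψ ha h1 (Ioc_subset_Icc_self htI)))
  linarith

lemma exists_cumulativeFlux_ge_mul_slope (hv : IsShootingSolution g ψ m a v) (hg : IsMonostable g)
    (hψ : IsSlopeLaw ψ) (ha : a ∈ Ico (1 / 2) 1) (hc : 0 < c)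
    (hlow : ∀ x ∈ Icc (1 / 2) 1, c * (1 - x) ≤ g x)
    (hhigh : ∀ x ∈ Icc 1 2, g x ≤ -(c * (x - 1))) (h1 : 0 ≤ cumulativeFlux g m v 1) :
    ∃ r ∈ Ioc (0 : ℝ) 1, 0 < cumulativeFlux g m v r ∧
      (1 / 8) ^ m * c / 32 * ψ (cumulativeFlux g m v r) ≤ cumulativeFlux g m v r := by
  have ha₀ : a ∈ Ioo (0 : ℝ) 1 := ⟨by linarith [ha.1], ha.2⟩
  rcases le_total (v (1 / 2)) 1 with hhalf | hhalf
  · have hquarter : v (1 / 4) ≤ 1 :=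
      (hv.monotoneOn hg.continuous hψ (by norm_num) (by norm_num) (by norm_num)).trans hhalf
    exact ⟨1 / 4, by norm_num, hv.cumulativeFlux_pos hg hψ ha₀ (by norm_num) hquarter,
      hv.mul_slope_le_cumulativeFlux_of_apply_half_le_one hg hψ ha.1 hc.le hlow hhalf⟩
  · have hthree : 1 ≤ v (3 / 4) :=
      hhalf.trans (hv.monotoneOn hg.continuous hψ (by norm_num) (by norm_num) (by norm_num))
    have created := hv.mul_sub_one_le_cumulativeFlux hg hψ ha.2.le hc.le hhigh h1 hthree
    have hrise := hv.slope_le_apply_sub_one hg hψ ha₀.1 h1 hhalf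
    have hδ : 0 < (1 / 8) ^ m * c / 4 := by positivity
    refine ⟨3 / 4, by norm_num, ?_, ?_⟩
    · rcases hthree.eq_or_lt with heq | hlt
      · exact hv.cumulativeFlux_pos hg hψ ha₀ (by norm_num) heq.ge
      · exact (mul_pos hδ (sub_pos.2 hlt)).trans_le created
    · have hslope := hψ.nonneg (cumulativeFlux g m v (3 / 4))
      calc (1 / 8) ^ m * c / 32 * ψ (cumulativeFlux g m v (3 / 4))
          ≤ (1 / 8) ^ m * c / 4 * (ψ (cumulativeFlux g m v (3 / 4)) / 4) := by
            nlinarith [mul_nonneg hδ.le hslope]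
        _ ≤ (1 / 8) ^ m * c / 4 * (v (3 / 4) - 1) := by gcongr
        _ ≤ cumulativeFlux g m v (3 / 4) := created

end IsShootingSolution

lemma eventually_mul_lt_of_isLittleO {δ : ℝ} (hδ : 0 < δ)
    (hψ₀ : (fun x => x) =o[𝓝[>] 0] ψ) (hψ : ∀ x, 0 ≤ ψ x) : ∀ᶠ x in 𝓝[>] 0, x < δ * ψ x := by
  filter_upwards [hψ₀.bound (half_pos hδ), self_mem_nhdsWithin] with x hx (hx₀ : 0 < x)
  rw [norm_of_nonneg hx₀.le, norm_of_nonneg (hψ x)] at hx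
  linarith

lemma IsMonostable.eventually_forall_ge_le (hg : IsMonostable g) {η : ℝ} (hη : 0 < η) :
    ∀ᶠ a in 𝓝[<] 1, ∀ x, a ≤ x → g x ≤ η := by
  have near_one : ∀ᶠ x in 𝓝 1, g x < η :=
    hg.continuous.continuousAt.eventually_lt_const (hg.map_one ▸ hη)
  obtain ⟨l, hl, hlη⟩ := exists_Ioc_subset_of_mem_nhds near_one ⟨0, one_pos⟩
  filter_upwards [Ioo_mem_nhdsLT hl] with a ha x hax
  rcases le_total x 1 with hx | hx
  · exact (hlη ⟨ha.1.trans_le hax, hx⟩).le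
  · exact (hg.nonpos hx).trans hη.le

theorem eventually_fluxDensity_one_neg (hg : IsMonostable g) (hψ : IsSlopeLaw ψ)
    (hψ₀ : (fun x => x) =o[𝓝[>] 0] ψ) (m : ℕ) :
    ∀ᶠ a in 𝓝[<] 1, ∀ v, IsShootingSolution g ψ m a v → fluxDensity g m v 1 < 0 := by
  obtain ⟨c, hc, hgc⟩ := hg.exists_linear_bound (isCompact_Icc (a := 1 / 2) (b := 2))
    fun x hx => half_pos one_pos |>.trans_le hx.1
  have hδ : 0 < (1 / 8) ^ m * c / 32 := by positivity
  obtain ⟨η, hη, hηδ⟩ := mem_nhdsGT_iff_exists_Ioc_subset.1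
    (eventually_mul_lt_of_isLittleO hδ hψ₀ hψ.nonneg)
  filter_upwards [hg.eventually_forall_ge_le hη, Ioo_mem_nhdsLT one_half_lt_one]
    with a hga ha v hv
  by_contra! h1
  rw [← cumulativeFlux_one] at h1
  obtain ⟨r, hr, hz, hzδ⟩ := hv.exists_cumulativeFlux_ge_mul_slope hg hψ ⟨ha.1.le, ha.2⟩ hc
    (fun x hx => (hgc x ⟨hx.1, hx.2.trans one_le_two⟩).1 hx.2)
    (fun x hx => (hgc x ⟨one_half_lt_one.le.trans hx.1, hx.2⟩).2 hx.1) h1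
  have hW : fluxDensity g m v r ≤ η := fluxDensity_le hg.continuous hv.continuous hη.le
    (Ioc_subset_Icc_self hr) fun t ht =>
      hga _ (hv.le_apply hg.continuous hψ ⟨ht.1, ht.2.trans hr.2⟩)
  exact (hηδ ⟨hz, (cumulativeFlux_le_fluxDensity hr hz.le).trans hW⟩).not_ge hzδ

end NearEquilibrium

section TruncatedPower

variable {α β x : ℝ}

/-- The power `x ^ α` with `x` truncated to `[0, 1]`. For `α = (p - 1)⁻¹` it inverts
`s ↦ |s| ^ (p - 2) * s` on `[0, 1]`, the only range in which it is evaluated at the end. -/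
noncomputable def truncRpow (α x : ℝ) : ℝ := (max 0 (min x 1)) ^ α

lemma truncRpow_of_mem_Icc (hx : x ∈ Icc (0 : ℝ) 1) : truncRpow α x = x ^ α := by
  rw [truncRpow, min_eq_left hx.2, max_eq_right hx.1]

lemma truncRpow_zero (hα : α ≠ 0) : truncRpow α 0 = 0 := by
  rw [truncRpow_of_mem_Icc ⟨le_rfl, zero_le_one⟩, zero_rpow hα]

lemma isSlopeLaw_truncRpow (hα : 0 < α) : IsSlopeLaw (truncRpow α) where
  continuous := (continuous_rpow_const hα.le).comp (by fun_prop)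
  monotone x y hxy := rpow_le_rpow (le_max_left _ _) (by gcongr) hα.le
  nonneg x := rpow_nonneg (le_max_left _ _) _
  le_one x := rpow_le_one (le_max_left _ _) (max_le zero_le_one (min_le_right _ _)) hα.le

lemma isLittleO_truncRpow (hα : α < 1) : (fun x => x) =o[𝓝[>] 0] truncRpow α := by
  have ratio : Tendsto (fun x : ℝ => x ^ (1 - α)) (𝓝[>] 0) (𝓝 0) := by
    have hcont := (continuousAt_rpow_const 0 (1 - α) (Or.inr (sub_nonneg.2 hα.le))).tendsto
    rw [zero_rpow (sub_pos.2 hα).ne'] at hcont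
    exact hcont.mono_left nhdsWithin_le_nhds
  have near_zero : ∀ᶠ x : ℝ in 𝓝[>] 0, x ∈ Ioc (0 : ℝ) 1 := Ioc_mem_nhdsGT one_pos
  refine (Asymptotics.isLittleO_iff_tendsto' ?_).2 (ratio.congr' ?_)
  · filter_upwards [near_zero] with x hx hx₀
    rw [truncRpow_of_mem_Icc (Ioc_subset_Icc_self hx)] at hx₀
    exact absurd hx₀ (rpow_pos_of_pos hx.1 α).ne'
  · filter_upwards [near_zero] with x hx
    rw [truncRpow_of_mem_Icc (Ioc_subset_Icc_self hx), rpow_sub hx.1, rpow_one]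

lemma truncRpow_inv_rpow_le (hβ : 0 < β) (hx : 0 ≤ x) : truncRpow β⁻¹ (x ^ β) ≤ x :=
  calc truncRpow β⁻¹ (x ^ β) ≤ (x ^ β) ^ β⁻¹ :=
        rpow_le_rpow (le_max_left _ _) (max_le (rpow_nonneg hx β) (min_le_left _ _))
          (inv_nonneg.2 hβ.le)
    _ = x := rpow_rpow_inv hx hβ.ne'

lemma abs_rpow_mul_truncRpow {p : ℝ} (hp : 1 < p) (hx : x ∈ Icc (0 : ℝ) 1) :
    |truncRpow (p - 1)⁻¹ x| ^ (p - 2) * truncRpow (p - 1)⁻¹ x = x := by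
  have hp₁ : p - 1 ≠ 0 := (sub_pos.2 hp).ne'
  have hroot : 0 ≤ x ^ (p - 1)⁻¹ := rpow_nonneg hx.1 _
  have hexp : p - 1 = p - 2 + 1 := by ring
  rw [truncRpow_of_mem_Icc hx, abs_of_nonneg hroot, ← rpow_add_one' hroot (hexp ▸ hp₁), ← hexp,
    rpow_inv_rpow hx.1 hp₁]

end TruncatedPower

section SmallData

variable {g : ℝ → ℝ} {m : ℕ} {v : ℝ → ℝ} {a β r : ℝ}

namespace IsShootingSolution

lemma truncRpow_fluxDensity_le_apply (hv : IsShootingSolution g (truncRpow β⁻¹) m a v)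
    (hg : Continuous g) (hgβ : ∀ x, 0 ≤ x → g x ≤ x ^ β) (hβ : 0 < β) (ha : 0 ≤ a)
    (hr : r ∈ Icc (0 : ℝ) 1) : truncRpow β⁻¹ (fluxDensity g m v r) ≤ v r := by
  have hψ : IsSlopeLaw (truncRpow β⁻¹) := isSlopeLaw_truncRpow (inv_pos.2 hβ)
  have hv₀ : ∀ t ∈ Icc (0 : ℝ) 1, 0 ≤ v t := fun t ht => ha.trans (hv.le_apply hg hψ ht)
  have hW : fluxDensity g m v r ≤ v r ^ β := by
    refine fluxDensity_le hg hv.continuous (rpow_nonneg (hv₀ r hr) β) hr fun t ht => ?_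
    have htI : t ∈ Icc (0 : ℝ) 1 := ⟨ht.1, ht.2.trans hr.2⟩
    exact (hgβ _ (hv₀ t htI)).trans
      (rpow_le_rpow (hv₀ t htI) (hv.monotoneOn hg hψ htI hr ht.2) hβ.le)
  exact (hψ.monotone hW).trans (truncRpow_inv_rpow_le hβ (hv₀ r hr))

lemma apply_le_mul_exp (hv : IsShootingSolution g (truncRpow β⁻¹) m a v) (hg : Continuous g)
    (hgβ : ∀ x, 0 ≤ x → g x ≤ x ^ β) (hβ : 0 < β) (ha : 0 ≤ a) (hr : r ∈ Icc (0 : ℝ) 1) :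
    v r ≤ a * exp r := by
  have hψ : IsSlopeLaw (truncRpow β⁻¹) := isSlopeLaw_truncRpow (inv_pos.2 hβ)
  have hderiv := hasDerivAt_shootingMap (m := m) (a := a) hg hψ.continuous hv.continuous
  have gronwall := norm_le_gronwallBound_of_norm_deriv_right_le (δ := a) (K := 1) (ε := 0)
    (HasDerivAt.continuousOn fun t _ => hderiv t) (fun t _ => (hderiv t).hasDerivWithinAt)
    (by rw [shootingMap_zero, norm_of_nonneg ha])
    (fun t ht => by
      have htI := Ico_subset_Icc_self ht
      rw [← hv.eq t htI, norm_of_nonneg (hψ.nonneg _), one_mul, add_zero]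
      exact (hv.truncRpow_fluxDensity_le_apply hg hgβ hβ ha htI).trans (le_abs_self _)) r hr
  rw [← hv.eq r hr, gronwallBound_ε0, one_mul, sub_zero] at gronwall
  exact (le_abs_self _).trans gronwall

theorem fluxDensity_one_pos (hv : IsShootingSolution g (truncRpow β⁻¹) m a v) (hg : IsMonostable g)
    (hgβ : ∀ x, 0 ≤ x → g x ≤ x ^ β) (hβ : 0 < β) (ha : 0 < a) (hae : a * exp 1 ≤ 1) :
    0 < fluxDensity g m v 1 := by
  have ha1 : a < 1 := (lt_mul_of_one_lt_right ha (one_lt_exp_iff.2 one_pos)).trans_le hae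
  rw [← cumulativeFlux_one]
  exact hv.cumulativeFlux_pos hg (isSlopeLaw_truncRpow (inv_pos.2 hβ)) ⟨ha, ha1⟩
    ⟨one_pos, le_rfl⟩
    ((hv.apply_le_mul_exp hg.continuous hgβ hβ ha.le ⟨zero_le_one, le_rfl⟩).trans hae)

end IsShootingSolution

end SmallData

section RadialNeumann

variable {p q a : ℝ} {m : ℕ} {f v : ℝ → ℝ}

lemma IsShootingSolution.isRadialNeumannSolution {g : ℝ → ℝ} (hp : 1 < p) (hg : IsMonostable g)
    (hgp : ∀ x, 0 ≤ x → g x ≤ x ^ (p - 1)) (ha : 0 < a)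
    (hv : IsShootingSolution g (truncRpow (p - 1)⁻¹) m a v) (h1 : fluxDensity g m v 1 = 0) :
    IsRadialNeumannSolution p (m + 1) (fun s => s ^ (p - 1) - g s) v
      fun r => truncRpow (p - 1)⁻¹ (fluxDensity g m v r) := by
  have hα : 0 < (p - 1)⁻¹ := inv_pos.2 (sub_pos.2 hp)
  have hψ : IsSlopeLaw (truncRpow (p - 1)⁻¹) := isSlopeLaw_truncRpow hα
  refine ⟨fun r hr => ?_, ?_, ?_, ?_, fun r hr => ?_⟩
  · exact (hasDerivAt_shootingMap hg.continuous hψ.continuous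
      hv.continuous r).hasDerivWithinAt.congr hv.eq (hv.eq r hr)
  · exact (hψ.continuous.comp (continuous_fluxDensity hg.continuous hv.continuous)).continuousOn
  · simp only [fluxDensity_zero, truncRpow_zero hα.ne']
  · simp only [h1, truncRpow_zero hα.ne']
  · simp only [sub_sub_cancel]
    refine (hasDerivAt_cumulativeFlux hg.continuous hv.continuous r).congr_of_eventuallyEq ?_
    filter_upwards [Ioo_mem_nhds hr.1 hr.2] with s hs
    have hW : fluxDensity g m v s ∈ Icc (0 : ℝ) 1 :=
      hv.fluxDensity_mem_Icc hg hψ (fun x => hg.le_one hgp (sub_pos.2 hp).le) ha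
        (cumulativeFlux_one.trans h1).ge (Ioo_subset_Ioc_self hs)
    rw [flux, abs_rpow_mul_truncRpow hp hW]
    exact pow_mul_fluxDensity g m v s

lemma IsShootingSolution.not_forall_eq_apply_zero {g ψ : ℝ → ℝ}
    (hv : IsShootingSolution g ψ m a v) (hg : IsMonostable g) (hψ : IsSlopeLaw ψ)
    (ha : a ∈ Ioo (0 : ℝ) 1) (h1 : fluxDensity g m v 1 = 0) :
    ¬ ∀ r ∈ Icc (0 : ℝ) 1, v r = v 0 := fun hconst => by
  have hv1 : v 1 ≤ 1 := by
    rw [hconst 1 ⟨zero_le_one, le_rfl⟩, hv.apply_zero]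
    exact ha.2.le
  have hpos := hv.cumulativeFlux_pos hg hψ ha ⟨one_pos, le_rfl⟩ hv1
  exact hpos.ne' (cumulativeFlux_one.trans h1)

theorem stmt_2_general (hp : 2 < p) {N : ℕ} (hN : 1 ≤ N)
    (hf : IsMonostable fun s => s ^ (p - 1) - f s) (hf₀ : ∀ s, 0 ≤ s → 0 ≤ f s) :
    ∃ u u' : ℝ → ℝ,
      IsRadialNeumannSolution p N f u u' ∧
      (∀ r ∈ Icc (0 : ℝ) 1, 0 < u r) ∧
      MonotoneOn u (Icc (0 : ℝ) 1) ∧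
      ¬ (∀ r ∈ Icc (0 : ℝ) 1, u r = u 0) := by
  obtain ⟨m, rfl⟩ := Nat.exists_eq_add_of_le' hN
  have hβ : 1 < p - 1 := by linarith
  have hψ : IsSlopeLaw (truncRpow (p - 1)⁻¹) := isSlopeLaw_truncRpow (by positivity)
  have hψ₀ := isLittleO_truncRpow (inv_lt_one_of_one_lt₀ hβ)
  have hgβ : ∀ x, 0 ≤ x → x ^ (p - 1) - f x ≤ x ^ (p - 1) := fun x hx => sub_le_self _ (hf₀ x hx)
  have exp_small : exp (-1) * exp 1 ≤ 1 := by rw [← exp_add, neg_add_cancel, exp_zero]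
  obtain ⟨a₁, hneg, ha₁⟩ := ((eventually_fluxDensity_one_neg hf hψ hψ₀ m).and
    (Ioo_mem_nhdsLT (exp_lt_one_iff.2 neg_one_lt_zero))).exists
  obtain ⟨a, ha, v, hv, h1⟩ := exists_isShootingSolution_fluxDensity_eq_zero hf.continuous
    hψ.continuous hψ.abs_le_one ha₁.1.le
    (fun v hv => hv.fluxDensity_one_pos hf hgβ (by positivity) (exp_pos _) exp_small) hneg
  have ha₀ : a ∈ Ioo (0 : ℝ) 1 := ⟨(exp_pos _).trans_le ha.1, ha.2.trans_lt ha₁.2⟩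
  have hsol := hv.isRadialNeumannSolution (by linarith) hf hgβ ha₀.1 h1
  simp only [sub_sub_cancel] at hsol
  exact ⟨v, _, hsol, fun r hr => ha₀.1.trans_le (hv.le_apply hf.continuous hψ hr),
    hv.monotoneOn hf.continuous hψ, hv.not_forall_eq_apply_zero hf hψ ha₀ h1⟩

lemma isMonostable_rpow_sub_rpow (hp : 1 < p) (hq : p < q) :
    IsMonostable fun s => s ^ (p - 1) - s ^ (q - 1) where
  continuous := (continuous_rpow_const (by linarith)).sub (continuous_rpow_const (by linarith))
  map_one := by simp only [one_rpow, sub_self]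
  pos x hx hx1 := sub_pos.2 (rpow_lt_rpow_of_exponent_gt hx hx1 (by linarith))
  neg x hx := sub_neg.2 (rpow_lt_rpow_of_exponent_lt hx (by linarith))
  deriv_neg := by
    have hpow (β : ℝ) : HasDerivAt (fun s : ℝ => s ^ β) β 1 := by
      simpa only [one_rpow, mul_one] using hasDerivAt_rpow_const (p := β) (Or.inl one_ne_zero)
    rw [((hpow (p - 1)).fun_sub (hpow (q - 1))).deriv]
    linarith

end RadialNeumann

theorem stmt_2 (p : ℝ) (hp : 2 < p) (N : ℕ) (hN : 1 ≤ N) (q : ℝ) (hq : p < q) :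
    ∃ u u' : ℝ → ℝ,
      IsRadialNeumannSolution p N (fun s => s ^ (q - 1)) u u' ∧
      (∀ r ∈ Icc (0:ℝ) 1, 0 < u r) ∧
      MonotoneOn u (Icc (0:ℝ) 1) ∧
      ¬ (∀ r ∈ Icc (0:ℝ) 1, u r = u 0) :=
  stmt_2_general hp hN (isMonostable_rpow_sub_rpow (by linarith) hq)
    fun _ hs => rpow_nonneg hs (q - 1)
end

section
/- For every integer N ≥ 1 there exists a constant C > 0, depending only on N, with the following property: for every p > 2 and every function u of class C^1 on the closed unit ball B̄ ⊂ ℝ^N which is radial (u(x) depends only on |x|), nonnegative, and radially nondecreasing (u(x) ≤ u(y) whenever |x| ≤ |y|), one has sup_{x ∈ B̄} u(x) ≤ C (∫_B (|∇u(x)|^p + |u(x)|^p) dx)^{1/p}, where the integral is with respect to Lebesgue measure on the open unit ball B. -/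
open Real Filter Set MeasureTheory

/-!
Along a ray, `u(e) = ∫₀¹ d/dr (rⁿ u(re)) dr ≤ n ∫₀¹ rⁿ⁻¹ (|u(re)| + |∂ᵣu(re)|) dr`. In polar
coordinates the right-hand side is the average over the unit ball of a function which, for radial
`u`, is at most `|u| + ‖∇u‖`. Jensen's inequality then passes from `L¹` to `Lᵖ`, and monotonicity
says that the boundary value `u(e)` is the supremum. The constant does not depend on `p` because
`|B|^(-1/p) ≤ max 1 |B|⁻¹`.
-/

open Metric Module Topology

theorem average_le_rpow_average_rpow {α : Type*} [MeasurableSpace α] {μ : Measure α}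
    [IsFiniteMeasure μ] [NeZero μ] {f : α → ℝ} {p : ℝ} (hp : 1 ≤ p) (hf₀ : ∀ x, 0 ≤ f x)
    (hf : Integrable f μ) (hfp : Integrable (fun x ↦ f x ^ p) μ) :
    ⨍ x, f x ∂μ ≤ (⨍ x, f x ^ p ∂μ) ^ (1 / p) := by
  have hp₀ : 0 < p := by linarith
  have jensen : (⨍ x, f x ∂μ) ^ p ≤ ⨍ x, f x ^ p ∂μ :=
    (convexOn_rpow hp).map_average_le
      (continuousOn_id.rpow_const fun _ _ ↦ Or.inr hp₀.le) isClosed_Ici (ae_of_all _ hf₀) hf hfp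
  have average_nonneg : 0 ≤ ⨍ x, f x ∂μ := integral_nonneg hf₀
  have average_rpow_nonneg : 0 ≤ ⨍ x, f x ^ p ∂μ :=
    integral_nonneg fun x ↦ rpow_nonneg (hf₀ x) p
  rw [one_div]
  exact (le_rpow_inv_iff_of_pos average_nonneg average_rpow_nonneg hp₀).2 jensen

theorem average_add_le_two_mul_rpow_average {α : Type*} [MeasurableSpace α] {μ : Measure α}
    [IsFiniteMeasure μ] [NeZero μ] {f g : α → ℝ} {p : ℝ} (hp : 1 ≤ p)
    (hf₀ : ∀ x, 0 ≤ f x) (hg₀ : ∀ x, 0 ≤ g x) (hf : Integrable f μ) (hg : Integrable g μ)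
    (hfp : Integrable (fun x ↦ f x ^ p) μ) (hgp : Integrable (fun x ↦ g x ^ p) μ) :
    ⨍ x, (f x + g x) ∂μ ≤ 2 * (⨍ x, (f x ^ p + g x ^ p) ∂μ) ^ (1 / p) := by
  have average_add : ⨍ x, (f x + g x) ∂μ = ⨍ x, f x ∂μ + ⨍ x, g x ∂μ :=
    integral_add hf.to_average hg.to_average
  have average_rpow_add :
      ⨍ x, (f x ^ p + g x ^ p) ∂μ = ⨍ x, f x ^ p ∂μ + ⨍ x, g x ^ p ∂μ :=
    integral_add hfp.to_average hgp.to_average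
  have hf_avg₀ : 0 ≤ ⨍ x, f x ^ p ∂μ := integral_nonneg fun x ↦ rpow_nonneg (hf₀ x) p
  have hg_avg₀ : 0 ≤ ⨍ x, g x ^ p ∂μ := integral_nonneg fun x ↦ rpow_nonneg (hg₀ x) p
  rw [average_add, average_rpow_add, two_mul]
  gcongr
  · exact (average_le_rpow_average_rpow hp hf₀ hf hfp).trans (by gcongr; linarith)
  · exact (average_le_rpow_average_rpow hp hg₀ hg hgp).trans (by gcongr; linarith)

theorem rpow_le_max_one_self {a s : ℝ} (ha : 0 ≤ a) (hs₀ : 0 ≤ s) (hs₁ : s ≤ 1) :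
    a ^ s ≤ max 1 a :=
  calc a ^ s ≤ max 1 a ^ s := rpow_le_rpow ha (le_max_right 1 a) hs₀
    _ ≤ max 1 a := rpow_le_self_of_one_le (le_max_left 1 a) hs₁

theorem measureReal_ball_pos {X : Type*} [PseudoMetricSpace X] [ProperSpace X] [MeasurableSpace X]
    (μ : Measure X) [μ.IsOpenPosMeasure] [IsFiniteMeasureOnCompacts μ] (x : X) {R : ℝ}
    (hR : 0 < R) : 0 < μ.real (ball x R) :=
  ENNReal.toReal_pos (measure_ball_pos μ x hR).ne' measure_ball_lt_top.ne

theorem integrableOn_ball_of_continuousOn_closedBall {X G : Type*} [MetricSpace X] [ProperSpace X]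
    [MeasurableSpace X] [OpensMeasurableSpace X] {μ : Measure X} [IsFiniteMeasureOnCompacts μ]
    [NormedAddCommGroup G] {f : X → G} {x : X} {R : ℝ} (hf : ContinuousOn f (closedBall x R)) :
    IntegrableOn f (ball x R) μ :=
  (hf.integrableOn_compact (isCompact_closedBall x R)).mono_set ball_subset_closedBall

variable {E F : Type*} [NormedAddCommGroup E] [NormedSpace ℝ E]
  [NormedAddCommGroup F] [NormedSpace ℝ F]

theorem norm_apply_one_le_integral_pow_mul [CompleteSpace F] {f f' : ℝ → F} {n : ℕ} (hn : n ≠ 0)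
    (hf : ContinuousOn f (Icc 0 1)) (hf' : ContinuousOn f' (Icc 0 1))
    (hderiv : ∀ r ∈ Ioo (0 : ℝ) 1, HasDerivAt f (f' r) r) :
    ‖f 1‖ ≤ n * ∫ r in (0 : ℝ)..1, r ^ (n - 1) * (‖f' r‖ + ‖f r‖) := by
  have ftc : ∫ r in (0 : ℝ)..1, (r ^ n • f' r + (n * r ^ (n - 1)) • f r) = f 1 := by
    rw [intervalIntegral.integral_eq_sub_of_hasDerivAt_of_le (f := fun r ↦ r ^ n • f r) zero_le_one]
    · simp [hn]
    · fun_prop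
    · exact fun r hr ↦ (hasDerivAt_pow n r).smul (hderiv r hr)
    · exact ContinuousOn.intervalIntegrable_of_Icc zero_le_one (by fun_prop)
  rw [← ftc, ← intervalIntegral.integral_const_mul]
  refine intervalIntegral.norm_integral_le_of_norm_le zero_le_one (ae_of_all _ fun r hr ↦ ?_)
    (ContinuousOn.intervalIntegrable_of_Icc zero_le_one (by fun_prop))
  have hr₀ : 0 ≤ r := hr.1.le
  have pow_le : r ^ n ≤ n * r ^ (n - 1) :=
    (pow_le_pow_of_le_one hr₀ hr.2 (n.sub_le 1)).trans
      (le_mul_of_one_le_left (by positivity) (mod_cast Nat.one_le_iff_ne_zero.2 hn))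
  calc ‖r ^ n • f' r + (n * r ^ (n - 1)) • f r‖
      ≤ ‖r ^ n • f' r‖ + ‖(n * r ^ (n - 1)) • f r‖ := norm_add_le _ _
    _ = r ^ n * ‖f' r‖ + n * r ^ (n - 1) * ‖f r‖ := by
      rw [norm_smul_of_nonneg (by positivity), norm_smul_of_nonneg (by positivity)]
    _ ≤ n * r ^ (n - 1) * ‖f' r‖ + n * r ^ (n - 1) * ‖f r‖ := by gcongr
    _ = n * (r ^ (n - 1) * (‖f' r‖ + ‖f r‖)) := by ring

section PolarCoordinates

variable [FiniteDimensional ℝ E] [Nontrivial E] [MeasurableSpace E] [BorelSpace E]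
  (μ : Measure E) [μ.IsAddHaarMeasure]

theorem setIntegral_ball_fun_norm_addHaar (f : ℝ → F) (R : ℝ) :
    ∫ x in ball (0 : E) R, f ‖x‖ ∂μ =
      finrank ℝ E • μ.real (ball 0 1) • ∫ r in Ioo 0 R, r ^ (finrank ℝ E - 1) • f r := by
  have ball_side : ∫ x in ball (0 : E) R, f ‖x‖ ∂μ = ∫ x, (Iio R).indicator f ‖x‖ ∂μ := by
    rw [← integral_indicator measurableSet_ball]
    simp [indicator]
  have ray_side : ∫ r in Ioi (0 : ℝ), r ^ (finrank ℝ E - 1) • (Iio R).indicator f r =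
      ∫ r in Ioo 0 R, r ^ (finrank ℝ E - 1) • f r := by
    simp_rw [← indicator_smul_apply (Iio R) (fun r : ℝ ↦ r ^ (finrank ℝ E - 1)) f]
    rw [setIntegral_indicator measurableSet_Iio, Ioi_inter_Iio]
  rw [ball_side, integral_fun_norm_addHaar, ray_side]

theorem setAverage_unitBall_fun_norm_addHaar (f : ℝ → F) :
    ⨍ x in ball (0 : E) 1, f ‖x‖ ∂μ =
      finrank ℝ E • ∫ r in (0 : ℝ)..1, r ^ (finrank ℝ E - 1) • f r := by
  rw [setAverage_eq, setIntegral_ball_fun_norm_addHaar,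
    intervalIntegral.integral_of_le zero_le_one, integral_Ioc_eq_integral_Ioo, smul_comm,
    inv_smul_smul₀ (measureReal_ball_pos μ 0 one_pos).ne']

end PolarCoordinates

theorem uniqueDiffOn_closedBall (x : E) {R : ℝ} (hR : 0 < R) : UniqueDiffOn ℝ (closedBall x R) :=
  uniqueDiffOn_convex (convex_closedBall x R)
    ⟨x, ball_subset_interior_closedBall (mem_ball_self hR)⟩

theorem hasDerivAt_comp_smul_of_mem_nhds {u : E → F} {s : Set E} {v : E} {r : ℝ}
    (hu : DifferentiableOn ℝ u s) (hs : s ∈ 𝓝 (r • v)) :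
    HasDerivAt (fun t : ℝ ↦ u (t • v)) (fderivWithin ℝ u s (r • v) v) r := by
  have ray : HasDerivAt (fun t : ℝ ↦ t • v) v r := by
    simpa using (hasDerivAt_id r).smul_const v
  have hu_at := (hu _ (mem_of_mem_nhds hs)).hasFDerivWithinAt.hasFDerivAt hs
  exact hu_at.comp_hasDerivAt r ray

theorem norm_le_integral_ray [CompleteSpace F] {u : E → F} {e : E} {n : ℕ}
    (hu : ContDiffOn ℝ 1 u (closedBall 0 1)) (he : ‖e‖ = 1) (hn : n ≠ 0) :
    ‖u e‖ ≤ n * ∫ r in (0 : ℝ)..1, r ^ (n - 1) *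
      (‖fderivWithin ℝ u (closedBall 0 1) (r • e) e‖ + ‖u (r • e)‖) := by
  have hDu := hu.continuousOn_fderivWithin (uniqueDiffOn_closedBall 0 one_pos) le_rfl
  have ray_mem : MapsTo (fun r : ℝ ↦ r • e) (Icc 0 1) (closedBall 0 1) := fun r hr ↦ by
    simp [norm_smul, he, abs_of_nonneg hr.1, hr.2]
  have ray_cont : ContinuousOn (fun r : ℝ ↦ r • e) (Icc 0 1) := by fun_prop
  have restriction_bound := norm_apply_one_le_integral_pow_mul hn
    (hu.continuousOn.comp ray_cont ray_mem)
    ((hDu.comp ray_cont ray_mem).clm_apply continuousOn_const)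
    fun r hr ↦ hasDerivAt_comp_smul_of_mem_nhds (hu.differentiableOn one_ne_zero)
      (closedBall_mem_nhds_of_mem (by simp [norm_smul, he, abs_of_pos hr.1, hr.2]))
  simpa only [Function.comp_apply, one_smul] using restriction_bound

/-- A function is radial on `s` if its values at points of `s` depend only on the norm. -/
def IsRadialOn {β : Type*} (u : E → β) (s : Set E) : Prop :=
  ∀ x ∈ s, ∀ y ∈ s, ‖x‖ = ‖y‖ → u x = u y

namespace IsRadialOn

theorem apply_norm_smul {β : Type*} {u : E → β} {e x : E} {R : ℝ}
    (hrad : IsRadialOn u (closedBall 0 R)) (he : ‖e‖ = 1) (hx : x ∈ closedBall 0 R) :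
    u (‖x‖ • e) = u x := by
  have hnorm : ‖‖x‖ • e‖ = ‖x‖ := by simp [norm_smul, he]
  exact hrad _ (by simpa [hnorm] using hx) x hx hnorm

variable {u : E → F} {e : E}

theorem norm_fderivWithin_norm_smul_apply_le {y : E} (hrad : IsRadialOn u (closedBall 0 1))
    (hu : DifferentiableOn ℝ u (closedBall 0 1)) (he : ‖e‖ = 1) (hy : y ∈ ball 0 1) :
    ‖fderivWithin ℝ u (closedBall 0 1) (‖y‖ • e) e‖ ≤ ‖fderivWithin ℝ u (closedBall 0 1) y‖ := by
  rcases eq_or_ne y 0 with rfl | hy₀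
  · simpa [he] using (fderivWithin ℝ u (closedBall 0 1) 0).le_opNorm e
  have norm_pos : 0 < ‖y‖ := norm_pos_iff.2 hy₀
  have norm_lt_one : ‖y‖ < 1 := by simpa using hy
  have hderiv {v : E} (hv : ‖v‖ = 1) : HasDerivAt (fun t : ℝ ↦ u (t • v))
      (fderivWithin ℝ u (closedBall 0 1) (‖y‖ • v) v) ‖y‖ :=
    hasDerivAt_comp_smul_of_mem_nhds hu
      (closedBall_mem_nhds_of_mem (by simpa [norm_smul, hv] using norm_lt_one))
  obtain ⟨v, hv, hvy⟩ : ∃ v : E, ‖v‖ = 1 ∧ ‖y‖ • v = y :=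
    ⟨‖y‖⁻¹ • y, norm_smul_inv_norm hy₀, smul_inv_smul₀ norm_pos.ne' y⟩
  have rays_agree : (fun t : ℝ ↦ u (t • v)) =ᶠ[𝓝 ‖y‖] fun t ↦ u (t • e) := by
    filter_upwards [Ioo_mem_nhds norm_pos norm_lt_one] with t ht
    have smul_mem {w : E} (hw : ‖w‖ = 1) : t • w ∈ closedBall (0 : E) 1 := by
      simp [norm_smul, hw, abs_of_pos ht.1, ht.2.le]
    exact hrad _ (smul_mem hv) _ (smul_mem he) (by simp [norm_smul, hv, he])
  have derivs_agree := (hderiv he).unique ((hderiv hv).congr_of_eventuallyEq rays_agree.symm)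
  rw [derivs_agree, hvy]
  simpa [hv] using (fderivWithin ℝ u (closedBall 0 1) y).le_opNorm v

variable [FiniteDimensional ℝ E] [Nontrivial E] [MeasurableSpace E] [BorelSpace E]
  [CompleteSpace F] (μ : Measure E) [μ.IsAddHaarMeasure]

theorem norm_le_setAverage_unitBall (hrad : IsRadialOn u (closedBall 0 1))
    (hu : ContDiffOn ℝ 1 u (closedBall 0 1)) (he : ‖e‖ = 1) :
    ‖u e‖ ≤ ⨍ x in ball 0 1, (‖fderivWithin ℝ u (closedBall 0 1) x‖ + ‖u x‖) ∂μ := by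
  have hDu := hu.continuousOn_fderivWithin (uniqueDiffOn_closedBall 0 one_pos) le_rfl
  have ray_bound := norm_le_integral_ray hu he (finrank_pos (R := ℝ) (M := E)).ne'
  have radial_bound {x : E} (hx : x ∈ ball 0 1) :=
    hrad.norm_fderivWithin_norm_smul_apply_le (hu.differentiableOn one_ne_zero) he hx
  set Du := fderivWithin ℝ u (closedBall 0 1)
  calc ‖u e‖
      ≤ finrank ℝ E * ∫ r in (0 : ℝ)..1,
          r ^ (finrank ℝ E - 1) * (‖Du (r • e) e‖ + ‖u (r • e)‖) := ray_bound
    _ = ⨍ x in ball 0 1, (‖Du (‖x‖ • e) e‖ + ‖u (‖x‖ • e)‖) ∂μ := by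
        rw [setAverage_unitBall_fun_norm_addHaar μ fun r ↦ ‖Du (r • e) e‖ + ‖u (r • e)‖]
        simp only [nsmul_eq_mul, smul_eq_mul]
    _ ≤ ⨍ x in ball 0 1, (‖Du x‖ + ‖u x‖) ∂μ := by
        simp only [setAverage_eq, smul_eq_mul]
        gcongr ?_ * ?_
        refine integral_mono_of_nonneg (ae_of_all _ fun x ↦ by positivity)
          (integrableOn_ball_of_continuousOn_closedBall (hDu.norm.add hu.continuousOn.norm))
          (ae_restrict_of_forall_mem measurableSet_ball fun x hx ↦ ?_)
        simp only [hrad.apply_norm_smul he (ball_subset_closedBall hx)]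
        gcongr
        exact radial_bound hx

theorem norm_le_two_mul_rpow_setAverage_unitBall {p : ℝ} (hp : 1 ≤ p)
    (hrad : IsRadialOn u (closedBall 0 1)) (hu : ContDiffOn ℝ 1 u (closedBall 0 1))
    (he : ‖e‖ = 1) :
    ‖u e‖ ≤ 2 * (⨍ x in ball 0 1,
      (‖fderivWithin ℝ u (closedBall 0 1) x‖ ^ p + ‖u x‖ ^ p) ∂μ) ^ (1 / p) := by
  have hDu := hu.continuousOn_fderivWithin (uniqueDiffOn_closedBall 0 one_pos) le_rfl
  have integrable_rpow {f : E → ℝ} (hf : ContinuousOn f (closedBall 0 1)) :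
      IntegrableOn (fun x ↦ f x ^ p) (ball 0 1) μ :=
    integrableOn_ball_of_continuousOn_closedBall
      (hf.rpow_const fun _ _ ↦ Or.inr (zero_le_one.trans hp))
  have : NeZero (μ.restrict (ball (0 : E) 1)) :=
    ⟨Measure.restrict_eq_zero.not.2 (measure_ball_pos μ 0 one_pos).ne'⟩
  have : IsFiniteMeasure (μ.restrict (ball (0 : E) 1)) :=
    isFiniteMeasure_restrict.2 measure_ball_lt_top.ne
  exact (hrad.norm_le_setAverage_unitBall μ hu he).trans <|
    average_add_le_two_mul_rpow_average hp (fun _ ↦ norm_nonneg _) (fun _ ↦ norm_nonneg _)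
      (integrableOn_ball_of_continuousOn_closedBall hDu.norm)
      (integrableOn_ball_of_continuousOn_closedBall hu.continuousOn.norm)
      (integrable_rpow hDu.norm) (integrable_rpow hu.continuousOn.norm)

end IsRadialOn

theorem stmt_3_general [FiniteDimensional ℝ E] [Nontrivial E] [MeasurableSpace E] [BorelSpace E]
    (μ : Measure E) [μ.IsAddHaarMeasure] :
    ∃ C : ℝ, 0 < C ∧ ∀ p : ℝ, 1 ≤ p → ∀ u : E → ℝ, ContDiffOn ℝ 1 u (closedBall 0 1) →
      (∀ x y : E, x ∈ closedBall 0 1 → y ∈ closedBall 0 1 → ‖x‖ ≤ ‖y‖ → u x ≤ u y) →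
      ∀ x ∈ closedBall (0 : E) 1, u x ≤ C * (∫ y in ball (0 : E) 1,
        (‖fderivWithin ℝ u (closedBall 0 1) y‖ ^ p + |u y| ^ p) ∂μ) ^ (1 / p) := by
  set ω := μ.real (ball (0 : E) 1)
  refine ⟨2 * max 1 ω⁻¹, by positivity, fun p hp u hu hmono x hx ↦ ?_⟩
  have hrad : IsRadialOn u (closedBall 0 1) := fun y hy z hz hyz ↦
    (hmono y z hy hz hyz.le).antisymm (hmono z y hz hy hyz.ge)
  obtain ⟨e, he⟩ := exists_norm_eq E zero_le_one
  have hxe : u x ≤ u e := hmono x e hx (by simp [he]) (by simpa [he] using hx)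
  set I := ∫ y in ball (0 : E) 1,
    (‖fderivWithin ℝ u (closedBall 0 1) y‖ ^ p + |u y| ^ p) ∂μ
  have I_nonneg : 0 ≤ I := integral_nonneg fun y ↦ by positivity
  calc u x ≤ ‖u e‖ := hxe.trans (le_abs_self _)
    _ ≤ 2 * (ω⁻¹ * I) ^ (1 / p) := by
      simpa only [setAverage_eq, smul_eq_mul, norm_eq_abs (u _)] using
        hrad.norm_le_two_mul_rpow_setAverage_unitBall μ hp hu he
    _ = 2 * ((ω⁻¹) ^ (1 / p) * I ^ (1 / p)) := by rw [mul_rpow (by positivity) I_nonneg]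
    _ ≤ 2 * (max 1 ω⁻¹ * I ^ (1 / p)) := by
      gcongr
      exact rpow_le_max_one_self (by positivity) (by positivity) ((div_le_one (by positivity)).2 hp)
    _ = 2 * max 1 ω⁻¹ * I ^ (1 / p) := by ring

theorem stmt_3 (N : ℕ) (hN : 1 ≤ N) :
    ∃ C : ℝ, 0 < C ∧ ∀ p : ℝ, 2 < p →
      ∀ u : EuclideanSpace ℝ (Fin N) → ℝ,
        ContDiffOn ℝ 1 u (Metric.closedBall 0 1) →
        (∀ x y : EuclideanSpace ℝ (Fin N), x ∈ Metric.closedBall 0 1 →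
          y ∈ Metric.closedBall 0 1 → ‖x‖ = ‖y‖ → u x = u y) →
        (∀ x ∈ Metric.closedBall (0 : EuclideanSpace ℝ (Fin N)) 1, 0 ≤ u x) →
        (∀ x y : EuclideanSpace ℝ (Fin N), x ∈ Metric.closedBall 0 1 →
          y ∈ Metric.closedBall 0 1 → ‖x‖ ≤ ‖y‖ → u x ≤ u y) →
        ∀ x ∈ Metric.closedBall (0 : EuclideanSpace ℝ (Fin N)) 1,
          u x ≤ C * (∫ y in Metric.ball (0 : EuclideanSpace ℝ (Fin N)) 1,
            (‖fderivWithin ℝ u (Metric.closedBall 0 1) y‖ ^ p + |u y| ^ p)) ^ (1 / p) := by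
  have : Nonempty (Fin N) := ⟨⟨0, hN⟩⟩
  obtain ⟨C, C_pos, hC⟩ := stmt_3_general (volume : Measure (EuclideanSpace ℝ (Fin N)))
  exact ⟨C, C_pos, fun p hp u hu _ _ hmono ↦ hC p (by linarith) u hu hmono⟩
end

section
/- Let p > 2, let N ≥ 1 be an integer, and let f ∈ C^1([0,∞)) satisfy (f0), (f1), (f2), (f3). Then there exists a constant K_∞ > 0 such that every nonnegative, nondecreasing radial profile solution u ∈ C^1([0,1]) of the Neumann problem −Δ_p u + u^{p−1} = f(u) in the unit ball of ℝ^N satisfies max_{r ∈ [0,1]} u(r) ≤ K_∞. -/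
open Real Filter Set

/-! The flux vanishes at both endpoints, so by Rolle's theorem its derivative
`r ^ (N - 1) * (u ^ (p - 1) - f u)` vanishes inside the interval: a Neumann solution attains a zero
of `s ^ (p - 1) - f s`. These zeros are bounded, because `f` eventually dominates `s ^ (p - 1)`;
hence so is `u 0`, the minimum of `u`. On the other hand `s ^ (p - 1) - f s` is bounded above, and
the mean value theorem for the flux bounds `u'` from above, independently of `u`. -/

theorem continuous_abs_rpow_sub_two_mul_self {p : ℝ} (hp : 1 < p) :
    Continuous fun x : ℝ => |x| ^ (p - 2) * x := by
  have hderiv : deriv (fun x : ℝ => ‖x‖ ^ p) = fun x => p * (|x| ^ (p - 2) * x) := by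
    ext x
    rw [(hasDerivAt_norm_rpow x hp).deriv, norm_eq_abs, mul_assoc]
  have hcont := (contDiff_norm_rpow (E := ℝ) hp).continuous_deriv le_rfl
  rw [hderiv] at hcont
  exact (continuous_const_smul_iff₀ (zero_lt_one.trans hp).ne').1 hcont

theorem le_of_abs_rpow_sub_two_mul_self_le {p x M : ℝ} (hp : 1 < p) (hM : 0 ≤ M)
    (hx : |x| ^ (p - 2) * x ≤ M ^ (p - 1)) : x ≤ M := by
  rcases le_or_gt x 0 with hx0 | hx0
  · exact hx0.trans hM
  · have hpow : |x| ^ (p - 2) * x = x ^ (p - 1) := by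
      rw [abs_of_pos hx0, ← rpow_add_one hx0.ne']
      ring_nf
    rw [hpow] at hx
    exact (rpow_le_rpow_iff hx0.le hM (by linarith)).1 hx

section Flux

variable {p : ℝ} {N : ℕ} {v : ℝ → ℝ}

theorem continuousOn_flux {s : Set ℝ} (hp : 1 < p) (hv : ContinuousOn v s) :
    ContinuousOn (flux p N v) s :=
  (continuousOn_id.pow _).mul ((continuous_abs_rpow_sub_two_mul_self hp).comp_continuousOn hv)

theorem flux_eq_zero {r : ℝ} (hv : v r = 0) : flux p N v r = 0 := by
  simp [flux, hv]

theorem abs_rpow_sub_two_mul_self_le_of_hasDerivAt_flux {h : ℝ → ℝ} {r C : ℝ} (hp : 1 < p)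
    (hr : 0 < r) (hC : 0 ≤ C) (hv : ContinuousOn v (Icc 0 r)) (hv0 : v 0 = 0)
    (hflux : ∀ t ∈ Ioo 0 r, HasDerivAt (flux p N v) (t ^ (N - 1) * h t) t)
    (hh : ∀ t ∈ Ioo 0 r, h t ≤ C) : |v r| ^ (p - 2) * v r ≤ C * r := by
  obtain ⟨t, ht, hslope⟩ := exists_hasDerivAt_eq_slope _ _ hr (continuousOn_flux hp hv) hflux
  rw [flux_eq_zero hv0, sub_zero, sub_zero, eq_div_iff hr.ne'] at hslope
  refine le_of_mul_le_mul_left ?_ (pow_pos hr (N - 1))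
  calc r ^ (N - 1) * (|v r| ^ (p - 2) * v r)
      = t ^ (N - 1) * h t * r := hslope.symm
    _ ≤ t ^ (N - 1) * C * r := by
      have := pow_nonneg ht.1.le (N - 1)
      gcongr
      exact hh t ht
    _ ≤ r ^ (N - 1) * C * r := by
      have := ht.1.le
      gcongr
      exact ht.2.le
    _ = r ^ (N - 1) * (C * r) := mul_assoc _ _ _

end Flux

namespace IsRadialNeumannSolution

variable {p : ℝ} {N : ℕ} {f u u' : ℝ → ℝ}

theorem exists_rpow_eq (hu : IsRadialNeumannSolution p N f u u') (hp : 1 < p) :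
    ∃ r ∈ Ioo (0 : ℝ) 1, u r ^ (p - 1) = f (u r) := by
  obtain ⟨-, hu'_cont, hu'_zero, hu'_one, hflux⟩ := hu
  obtain ⟨r, hr, hzero⟩ := exists_hasDerivAt_eq_zero zero_lt_one (continuousOn_flux hp hu'_cont)
    ((flux_eq_zero hu'_zero).trans (flux_eq_zero hu'_one).symm) hflux
  exact ⟨r, hr, sub_eq_zero.1 ((mul_eq_zero.1 hzero).resolve_left (pow_pos hr.1 _).ne')⟩

theorem deriv_le {M : ℝ} (hu : IsRadialNeumannSolution p N f u u') (hp : 1 < p) (hM : 0 ≤ M)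
    (hbound : ∀ r ∈ Ioo (0 : ℝ) 1, u r ^ (p - 1) - f (u r) ≤ M ^ (p - 1)) :
    ∀ r ∈ Ioo (0 : ℝ) 1, u' r ≤ M := by
  obtain ⟨-, hu'_cont, hu'_zero, -, hflux⟩ := hu
  intro r hr
  have hsub : Ioo 0 r ⊆ Ioo 0 1 := Ioo_subset_Ioo_right hr.2.le
  have hMpow : 0 ≤ M ^ (p - 1) := rpow_nonneg hM _
  refine le_of_abs_rpow_sub_two_mul_self_le hp hM ?_
  calc |u' r| ^ (p - 2) * u' r
      ≤ M ^ (p - 1) * r :=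
        abs_rpow_sub_two_mul_self_le_of_hasDerivAt_flux hp hr.1 hMpow
          (hu'_cont.mono (Icc_subset_Icc_right hr.2.le)) hu'_zero
          (fun t ht => hflux t (hsub ht)) fun t ht => hbound t (hsub ht)
    _ ≤ M ^ (p - 1) := mul_le_of_le_one_right hMpow hr.2.le

theorem le_apply_zero_add {M : ℝ} (hu : IsRadialNeumannSolution p N f u u') (hp : 1 < p)
    (hM : 0 ≤ M) (hbound : ∀ r ∈ Ioo (0 : ℝ) 1, u r ^ (p - 1) - f (u r) ≤ M ^ (p - 1)) :
    ∀ r ∈ Icc (0 : ℝ) 1, u r ≤ u 0 + M := by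
  intro r hr
  rcases hr.1.eq_or_lt with rfl | hr0
  · exact le_add_of_nonneg_right hM
  have hu_cont : ContinuousOn u (Icc 0 r) := fun t ht =>
    (hu.1 t (Icc_subset_Icc_right hr.2 ht)).continuousWithinAt.mono (Icc_subset_Icc_right hr.2)
  have hu_deriv : ∀ t ∈ Ioo 0 r, HasDerivAt u (u' t) t := fun t ht =>
    have ht1 : t < 1 := ht.2.trans_le hr.2
    (hu.1 t ⟨ht.1.le, ht1.le⟩).hasDerivAt (Icc_mem_nhds ht.1 ht1)
  obtain ⟨t, ht, hslope⟩ := exists_hasDerivAt_eq_slope _ _ hr0 hu_cont hu_deriv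
  rw [sub_zero, eq_div_iff hr0.ne'] at hslope
  have hincr : u r - u 0 ≤ M := calc
    u r - u 0 = u' t * r := hslope.symm
    _ ≤ M * r := by
      gcongr
      exact hu.deriv_le hp hM hbound t (Ioo_subset_Ioo_right hr.2 ht)
    _ ≤ M := mul_le_of_le_one_right hM hr.2
  linarith

theorem le_add_of_isMinOn {S M : ℝ} (hu : IsRadialNeumannSolution p N f u u') (hp : 1 < p)
    (hM : 0 ≤ M) (hS : ∀ s, S < s → s ^ (p - 1) < f s)
    (hbound : ∀ s, 0 ≤ s → s ^ (p - 1) - f s ≤ M ^ (p - 1))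
    (hu_zero : 0 ≤ u 0) (hmin : IsMinOn u (Icc 0 1) 0) :
    ∀ r ∈ Icc (0 : ℝ) 1, u r ≤ S + M := by
  have hu_zero_le : u 0 ≤ S := by
    obtain ⟨r, hr, heq⟩ := hu.exists_rpow_eq hp
    exact (hmin (Ioo_subset_Icc_self hr)).trans (not_lt.1 fun hlt => (hS _ hlt).ne heq)
  intro r hr
  have hle := hu.le_apply_zero_add hp hM
    (fun t ht => hbound _ (hu_zero.trans (hmin (Ioo_subset_Icc_self ht)))) r hr
  linarith

end IsRadialNeumannSolution

theorem bddAbove_rpow_sub {q : ℝ} {f : ℝ → ℝ} (hq : 0 ≤ q) (hf : BddBelow (f '' Ici 0))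
    (hlt : ∀ᶠ s in atTop, s ^ q < f s) :
    BddAbove ((fun s => s ^ q - f s) '' Ici 0) := by
  obtain ⟨m, hm⟩ := hf
  obtain ⟨S, hS⟩ := eventually_atTop.1 hlt
  refine ⟨max 0 (S ^ q - m), forall_mem_image.2 fun s hs => ?_⟩
  rcases le_total S s with hSs | hsS
  · exact le_max_of_le_left (sub_nonpos.2 (hS s hSs).le)
  · exact le_max_of_le_right
      (sub_le_sub (rpow_le_rpow hs hsS hq) (hm (mem_image_of_mem f hs)))

theorem eventually_rpow_lt_of_le_div_rpow {q a : ℝ} {f : ℝ → ℝ} (ha : 1 < a)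
    (hf : ∀ᶠ s in atTop, a ≤ f s / s ^ q) : ∀ᶠ s in atTop, s ^ q < f s := by
  filter_upwards [hf, eventually_gt_atTop 0] with s hs hs0
  exact (one_lt_div (rpow_pos_of_pos hs0 q)).1 (ha.trans_le hs)

theorem stmt_4_general {p : ℝ} (hp : 1 < p) {f : ℝ → ℝ} (hf : BddBelow (f '' Ici 0))
    (hlt : ∀ᶠ s in atTop, s ^ (p - 1) < f s) :
    ∃ K : ℝ, 0 < K ∧ ∀ (N : ℕ) (u u' : ℝ → ℝ), 1 ≤ N →
      IsRadialNeumannSolution p N f u u' → 0 ≤ u 0 → IsMinOn u (Icc 0 1) 0 →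
      ∀ r ∈ Icc (0 : ℝ) 1, u r ≤ K := by
  have hq : 0 < p - 1 := sub_pos.2 hp
  obtain ⟨S, hS0, hS⟩ := (atTop_basis_Ioi' 0).eventually_iff.1 hlt
  obtain ⟨C, hC⟩ := bddAbove_rpow_sub hq.le hf hlt
  set M := max C 0 ^ (p - 1)⁻¹
  have hM : 0 ≤ M := by positivity
  have hbound : ∀ s, 0 ≤ s → s ^ (p - 1) - f s ≤ M ^ (p - 1) := fun s hs => by
    rw [rpow_inv_rpow (le_max_right C 0) hq.ne']
    exact le_max_of_le_left (hC (mem_image_of_mem _ hs))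
  exact ⟨S + M, by positivity, fun N u u' _ hu hu_zero hmin =>
    hu.le_add_of_isMinOn hp hM (fun s hs => hS hs) hbound hu_zero hmin⟩

theorem stmt_4 (p : ℝ) (hp : 2 < p) (N : ℕ) (hN : 1 ≤ N) (f f' : ℝ → ℝ)
    (hC1 : ∀ s ∈ Ici (0:ℝ), HasDerivWithinAt f (f' s) (Ici 0) s)
    (hC1' : ContinuousOn f' (Ici 0))
    (hf0 : ∀ s ∈ Ici (0:ℝ), 0 ≤ f s ∧ 0 ≤ f' s)
    (hf1 : ∃ L ∈ Ico (0:ℝ) 1,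
      Tendsto (fun s => f s / s ^ (p - 1)) (nhdsWithin 0 (Ioi 0)) (nhds L))
    (hf2 : ∃ a : ℝ, 1 < a ∧ ∀ᶠ s in atTop, a ≤ f s / s ^ (p - 1))
    (hf3 : ∃ u₀ : ℝ, 0 < u₀ ∧ f u₀ = u₀ ^ (p - 1) ∧ (p - 1) * u₀ ^ (p - 2) < f' u₀) :
    ∃ K : ℝ, 0 < K ∧ ∀ u u' : ℝ → ℝ,
      IsRadialNeumannSolution p N f u u' →
      (∀ r ∈ Icc (0:ℝ) 1, 0 ≤ u r) →
      MonotoneOn u (Icc (0:ℝ) 1) →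
      ∀ r ∈ Icc (0:ℝ) 1, u r ≤ K := by
  obtain ⟨a, ha, hfa⟩ := hf2
  obtain ⟨K, hK, hbound⟩ := stmt_4_general (one_lt_two.trans hp)
    ⟨0, forall_mem_image.2 fun s hs => (hf0 s hs).1⟩ (eventually_rpow_lt_of_le_div_rpow ha hfa)
  have h0 : (0 : ℝ) ∈ Icc 0 1 := left_mem_Icc.2 zero_le_one
  exact ⟨K, hK, fun u u' hu hnonneg hmono =>
    hbound N u u' hN hu (hnonneg 0 h0) fun r hr => hmono h0 hr hr.1⟩
end

section
/- Let p > 2, let N ≥ 1 be an integer, and set p* := Np/(N−p) if p < N and p* := +∞ otherwise. Let f ∈ C^1([0,∞)) satisfy (f0), (f1), (f2), and (f3) at some u_0 > 0, and let K_∞ ≥ u_0 be a positive constant. Then for every ℓ with p < ℓ < p* there exists a function f̃ ∈ C^1([0,∞)) such that: f̃(s) ≥ 0 and f̃'(s) ≥ 0 for all s ≥ 0; lim_{s→0^+} f̃(s)/s^{p−1} exists and belongs to [0,1); liminf_{s→+∞} f̃(s)/s^{p−1} > 1; f̃(u_0) = u_0^{p−1} and f̃'(u_0) > (p−1)u_0^{p−2};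 lim_{s→+∞} f̃(s)/s^{ℓ−1} = 1; and f̃(s) = f(s) for all s ∈ [0, K_∞]. -/
open Real Filter Set

/-!
Past `K`, replace `f` by its tangent line at `K` plus `(s - K) ^ (ℓ - 1)`. As `ℓ > 2`, the added
power vanishes to first order at `K`, so the junction is `C¹`; all three summands are nonnegative
and nondecreasing, and the power dominates the tangent line at infinity. Since `p < ℓ`, this growth
makes `f̃(s) / s ^ (p - 1)` tend to `+∞`.
-/

open scoped Topology

theorem hasDerivWithinAt_union_of_isClosed {𝕜 E : Type*} [NontriviallyNormedField 𝕜]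
    [NormedAddCommGroup E] [NormedSpace 𝕜 E] {f f' : 𝕜 → E} {A B : Set 𝕜}
    (hA : IsClosed A) (hB : IsClosed B)
    (hfA : ∀ s ∈ A, HasDerivWithinAt f (f' s) A s)
    (hfB : ∀ s ∈ B, HasDerivWithinAt f (f' s) B s) (s : 𝕜) :
    HasDerivWithinAt f (f' s) (A ∪ B) s := by
  have extend {C : Set 𝕜} (hC : IsClosed C) (hfC : ∀ s ∈ C, HasDerivWithinAt f (f' s) C s) :
      HasDerivWithinAt f (f' s) C s := by
    by_cases hs : s ∈ C
    · exact hfC s hs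
    · exact HasFDerivWithinAt.of_notMem_closure (hC.closure_eq.symm ▸ hs)
  exact (extend hA hfA).union (extend hB hfB)

theorem piecewise_Iic_eqOn_Ici {α β : Type*} [LinearOrder α] {a : α} {f g : α → β}
    (h : f a = g a) : EqOn ((Iic a).piecewise f g) g (Ici a) := by
  intro s hs
  rcases eq_or_lt_of_le (mem_Ici.mp hs) with rfl | has
  · rw [piecewise_eq_of_mem _ _ _ self_mem_Iic, h]
  · exact piecewise_eq_of_notMem _ _ _ (notMem_Iic.mpr has)

section PowerGrowth

theorem tendsto_sub_rpow_div_rpow_atTop (K q : ℝ) :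
    Tendsto (fun s : ℝ => (s - K) ^ q / s ^ q) atTop (𝓝 1) := by
  have ratio : Tendsto (fun s : ℝ => 1 - K * s⁻¹) atTop (𝓝 1) := by
    simpa using (tendsto_inv_atTop_zero.const_mul K).const_sub (1 : ℝ)
  have power : Tendsto (fun s : ℝ => (1 - K * s⁻¹) ^ q) atTop (𝓝 1) := by
    simpa using ratio.rpow_const (p := q) (Or.inl one_ne_zero)
  refine power.congr' ?_
  filter_upwards [eventually_ge_atTop K, eventually_gt_atTop 0] with s hKs hs
  rw [← div_rpow (sub_nonneg.mpr hKs) hs.le, sub_div, div_self hs.ne', div_eq_mul_inv]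

theorem tendsto_affine_div_rpow_atTop {q : ℝ} (hq : 1 < q) (c d : ℝ) :
    Tendsto (fun s : ℝ => (c + d * s) / s ^ q) atTop (𝓝 0) := by
  have const_term : Tendsto (fun s : ℝ => s ^ (-q)) atTop (𝓝 0) :=
    tendsto_rpow_neg_atTop (by linarith)
  have linear_term : Tendsto (fun s : ℝ => s ^ (-(q - 1))) atTop (𝓝 0) :=
    tendsto_rpow_neg_atTop (by linarith)
  have total : Tendsto (fun s : ℝ => c * s ^ (-q) + d * s ^ (-(q - 1))) atTop (𝓝 0) := by
    simpa using (const_term.const_mul c).add (linear_term.const_mul d)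
  refine total.congr' ?_
  filter_upwards [eventually_gt_atTop 0] with s hs
  rw [neg_sub, rpow_sub hs, rpow_one, rpow_neg hs.le]
  ring

theorem tendsto_div_rpow_atTop_of_lt {f : ℝ → ℝ} {q r l : ℝ} (hqr : q < r) (hl : 0 < l)
    (hf : Tendsto (fun s => f s / s ^ r) atTop (𝓝 l)) :
    Tendsto (fun s => f s / s ^ q) atTop atTop := by
  refine (hf.pos_mul_atTop hl (tendsto_rpow_atTop (sub_pos.mpr hqr))).congr' ?_
  filter_upwards [eventually_gt_atTop 0] with s hs
  rw [rpow_sub hs, div_mul_div_cancel₀ (rpow_pos_of_pos hs r).ne']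

end PowerGrowth

section TangentAddRpow

/-- The affine function with value `c` and slope `d` at `K`, plus the power `(s - K) ^ q`. It
serves as the tail of a truncation and is only meant for `K ≤ s`, where the real power is not a junk
value. -/
noncomputable def tangentAddRpow (K q c d s : ℝ) : ℝ :=
  c + d * (s - K) + (s - K) ^ q

/-- The derivative of `tangentAddRpow K q c d`, for `1 ≤ q`; it does not involve the value `c`. -/
noncomputable def tangentAddRpowDeriv (K q d s : ℝ) : ℝ :=
  d + q * (s - K) ^ (q - 1)

variable {K q c d s : ℝ}

theorem tangentAddRpow_self (hq : q ≠ 0) : tangentAddRpow K q c d K = c := by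
  simp [tangentAddRpow, zero_rpow hq]

theorem tangentAddRpowDeriv_self (hq : 1 < q) : tangentAddRpowDeriv K q d K = d := by
  simp [tangentAddRpowDeriv, zero_rpow (sub_pos.mpr hq).ne']

theorem hasDerivAt_tangentAddRpow (hq : 1 ≤ q) :
    HasDerivAt (tangentAddRpow K q c d) (tangentAddRpowDeriv K q d s) s := by
  have shift : HasDerivAt (fun t : ℝ => t - K) 1 s := (hasDerivAt_id s).sub_const K
  have tangent : HasDerivAt (fun t => c + d * (t - K)) (d * 1) s :=
    (shift.const_mul d).const_add c
  refine (tangent.add (shift.rpow_const (p := q) (Or.inr hq))).congr_deriv ?_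
  rw [tangentAddRpowDeriv, mul_one, one_mul]

theorem continuous_tangentAddRpowDeriv (hq : 1 ≤ q) : Continuous (tangentAddRpowDeriv K q d) :=
  continuous_const.add <| continuous_const.mul <|
    (continuous_id.sub continuous_const).rpow_const fun _ => Or.inr (sub_nonneg.mpr hq)

theorem tangentAddRpow_nonneg (hc : 0 ≤ c) (hd : 0 ≤ d) (hs : K ≤ s) :
    0 ≤ tangentAddRpow K q c d s := by
  have := sub_nonneg.mpr hs
  unfold tangentAddRpow
  positivity

theorem tangentAddRpowDeriv_nonneg (hq : 0 ≤ q) (hd : 0 ≤ d) (hs : K ≤ s) :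
    0 ≤ tangentAddRpowDeriv K q d s := by
  have := sub_nonneg.mpr hs
  unfold tangentAddRpowDeriv
  positivity

theorem tendsto_tangentAddRpow_div_rpow_atTop (hq : 1 < q) (K c d : ℝ) :
    Tendsto (fun s => tangentAddRpow K q c d s / s ^ q) atTop (𝓝 1) := by
  have total := (tendsto_affine_div_rpow_atTop hq (c - d * K) d).add
    (tendsto_sub_rpow_div_rpow_atTop K q)
  rw [zero_add] at total
  refine total.congr fun s => ?_
  rw [tangentAddRpow, ← add_div]
  ring

end TangentAddRpow

section PowerTruncation

/-- The truncation `f̃` of `f` at `K`: it is `f` up to `K` and grows like `s ^ q` afterwards. The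
function `df` is passed as data and stands for the derivative of `f`; only `df K` enters. -/
noncomputable def powerTruncation (K q : ℝ) (f df : ℝ → ℝ) : ℝ → ℝ :=
  (Iic K).piecewise f (tangentAddRpow K q (f K) (df K))

/-- The derivative of `powerTruncation K q f df` when `df` is the derivative of `f` and `1 < q`. -/
noncomputable def powerTruncationDeriv (K q : ℝ) (df : ℝ → ℝ) : ℝ → ℝ :=
  (Iic K).piecewise df (tangentAddRpowDeriv K q (df K))

variable {a K q : ℝ} {f f' : ℝ → ℝ}

theorem powerTruncation_eqOn_Iic : EqOn (powerTruncation K q f f') f (Iic K) :=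
  piecewise_eqOn _ _ _

theorem powerTruncationDeriv_eqOn_Iic : EqOn (powerTruncationDeriv K q f') f' (Iic K) :=
  piecewise_eqOn _ _ _

theorem powerTruncation_eqOn_Ici (hq : q ≠ 0) :
    EqOn (powerTruncation K q f f') (tangentAddRpow K q (f K) (f' K)) (Ici K) :=
  piecewise_Iic_eqOn_Ici (tangentAddRpow_self hq).symm

theorem powerTruncationDeriv_eqOn_Ici (hq : 1 < q) :
    EqOn (powerTruncationDeriv K q f') (tangentAddRpowDeriv K q (f' K)) (Ici K) :=
  piecewise_Iic_eqOn_Ici (tangentAddRpowDeriv_self hq).symm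

theorem hasDerivWithinAt_powerTruncation (hq : 1 < q) (haK : a ≤ K)
    (hf : ∀ s ∈ Icc a K, HasDerivWithinAt f (f' s) (Icc a K) s) (s : ℝ) :
    HasDerivWithinAt (powerTruncation K q f f') (powerTruncationDeriv K q f' s) (Ici a) s := by
  rw [← Icc_union_Ici_eq_Ici haK]
  refine hasDerivWithinAt_union_of_isClosed isClosed_Icc isClosed_Ici (fun t ht => ?_)
    (fun t ht => ?_) s
  · rw [powerTruncationDeriv_eqOn_Iic ht.2]
    exact (hf t ht).congr_of_mem (powerTruncation_eqOn_Iic.mono Icc_subset_Iic_self) ht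
  · rw [powerTruncationDeriv_eqOn_Ici hq ht]
    exact (hasDerivAt_tangentAddRpow hq.le).hasDerivWithinAt.congr_of_mem
      (powerTruncation_eqOn_Ici (by linarith)) ht

theorem continuousOn_powerTruncationDeriv (hq : 1 < q) (haK : a ≤ K)
    (hf' : ContinuousOn f' (Icc a K)) : ContinuousOn (powerTruncationDeriv K q f') (Ici a) := by
  rw [← Icc_union_Ici_eq_Ici haK]
  exact (hf'.congr (powerTruncationDeriv_eqOn_Iic.mono Icc_subset_Iic_self)).union_of_isClosed
    ((continuous_tangentAddRpowDeriv hq.le).continuousOn.congr (powerTruncationDeriv_eqOn_Ici hq))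
    isClosed_Icc isClosed_Ici

theorem powerTruncation_nonneg (hq : q ≠ 0) (haK : a ≤ K) (hf : ∀ s ∈ Icc a K, 0 ≤ f s)
    (hf'K : 0 ≤ f' K) {s : ℝ} (hs : a ≤ s) : 0 ≤ powerTruncation K q f f' s := by
  rcases le_total s K with hsK | hKs
  · rw [powerTruncation_eqOn_Iic hsK]
    exact hf s ⟨hs, hsK⟩
  · rw [powerTruncation_eqOn_Ici hq hKs]
    exact tangentAddRpow_nonneg (hf K ⟨haK, le_rfl⟩) hf'K hKs

theorem powerTruncationDeriv_nonneg (hq : 1 < q) (haK : a ≤ K)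
    (hf' : ∀ s ∈ Icc a K, 0 ≤ f' s) {s : ℝ} (hs : a ≤ s) :
    0 ≤ powerTruncationDeriv K q f' s := by
  rcases le_total s K with hsK | hKs
  · rw [powerTruncationDeriv_eqOn_Iic hsK]
    exact hf' s ⟨hs, hsK⟩
  · rw [powerTruncationDeriv_eqOn_Ici hq hKs]
    exact tangentAddRpowDeriv_nonneg (by linarith) (hf' K ⟨haK, le_rfl⟩) hKs

theorem tendsto_powerTruncation_div_rpow_atTop (hq : 1 < q) :
    Tendsto (fun s => powerTruncation K q f f' s / s ^ q) atTop (𝓝 1) := by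
  refine (tendsto_tangentAddRpow_div_rpow_atTop hq K (f K) (f' K)).congr' ?_
  filter_upwards [eventually_ge_atTop K] with s hs
  rw [powerTruncation_eqOn_Ici (by linarith) hs]

theorem powerTruncation_eventuallyEq_nhdsGT (haK : a < K) :
    powerTruncation K q f f' =ᶠ[𝓝[>] a] f :=
  powerTruncation_eqOn_Iic.eventuallyEq_of_mem (mem_nhdsWithin_of_mem_nhds (Iic_mem_nhds haK))

end PowerTruncation

theorem stmt_5_general {p ℓ u₀ K : ℝ} {f f' : ℝ → ℝ} (hℓ2 : 2 < ℓ) (hpℓ : p < ℓ)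
    (hu₀ : 0 < u₀) (hK : u₀ ≤ K)
    (hC1 : ∀ s ∈ Icc 0 K, HasDerivWithinAt f (f' s) (Icc 0 K) s)
    (hC1' : ContinuousOn f' (Icc 0 K))
    (hf0 : ∀ s ∈ Icc 0 K, 0 ≤ f s ∧ 0 ≤ f' s)
    (hf1 : ∃ L ∈ Ico (0 : ℝ) 1, Tendsto (fun s => f s / s ^ (p - 1)) (𝓝[>] 0) (𝓝 L))
    (hf3 : f u₀ = u₀ ^ (p - 1) ∧ (p - 1) * u₀ ^ (p - 2) < f' u₀) :
    ∃ ft ft' : ℝ → ℝ,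
      (∀ s ∈ Ici (0 : ℝ), HasDerivWithinAt ft (ft' s) (Ici 0) s) ∧
      ContinuousOn ft' (Ici 0) ∧
      (∀ s ∈ Ici (0 : ℝ), 0 ≤ ft s ∧ 0 ≤ ft' s) ∧
      (∃ L ∈ Ico (0 : ℝ) 1, Tendsto (fun s => ft s / s ^ (p - 1)) (𝓝[>] 0) (𝓝 L)) ∧
      (∃ a : ℝ, 1 < a ∧ ∀ᶠ s in atTop, a ≤ ft s / s ^ (p - 1)) ∧
      ft u₀ = u₀ ^ (p - 1) ∧ (p - 1) * u₀ ^ (p - 2) < ft' u₀ ∧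
      Tendsto (fun s => ft s / s ^ (ℓ - 1)) atTop (𝓝 1) ∧
      ∀ s ∈ Icc 0 K, ft s = f s := by
  have hq : 1 < ℓ - 1 := by linarith
  have hK0 : 0 < K := hu₀.trans_le hK
  have growth := tendsto_powerTruncation_div_rpow_atTop (K := K) (f := f) (f' := f') hq
  have ratio_atTop := tendsto_div_rpow_atTop_of_lt (sub_lt_sub_right hpℓ 1) one_pos growth
  obtain ⟨L, hL, hfL⟩ := hf1
  refine ⟨powerTruncation K (ℓ - 1) f f', powerTruncationDeriv K (ℓ - 1) f',
    fun s _ => hasDerivWithinAt_powerTruncation hq hK0.le hC1 s,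
    continuousOn_powerTruncationDeriv hq hK0.le hC1',
    fun s hs => ⟨?nonneg, ?deriv_nonneg⟩, ⟨L, hL, ?limit_zero⟩,
    ⟨2, one_lt_two, ratio_atTop.eventually_ge_atTop 2⟩,
    (powerTruncation_eqOn_Iic hK).trans hf3.1,
    hf3.2.trans_eq (powerTruncationDeriv_eqOn_Iic hK).symm, growth,
    fun s hs => powerTruncation_eqOn_Iic hs.2⟩
  case nonneg =>
    exact powerTruncation_nonneg (by linarith) hK0.le (fun t ht => (hf0 t ht).1)
      (hf0 K ⟨hK0.le, le_rfl⟩).2 hs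
  case deriv_nonneg =>
    exact powerTruncationDeriv_nonneg hq hK0.le (fun t ht => (hf0 t ht).2) hs
  case limit_zero =>
    exact hfL.congr' ((powerTruncation_eventuallyEq_nhdsGT hK0).symm.div .rfl)

theorem stmt_5 (p : ℝ) (hp : 2 < p) (N : ℕ) (hN : 1 ≤ N) (f f' : ℝ → ℝ)
    (hC1 : ∀ s ∈ Ici (0:ℝ), HasDerivWithinAt f (f' s) (Ici 0) s)
    (hC1' : ContinuousOn f' (Ici 0))
    (hf0 : ∀ s ∈ Ici (0:ℝ), 0 ≤ f s ∧ 0 ≤ f' s)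
    (hf1 : ∃ L ∈ Ico (0:ℝ) 1,
      Tendsto (fun s => f s / s ^ (p - 1)) (nhdsWithin 0 (Ioi 0)) (nhds L))
    (hf2 : ∃ a : ℝ, 1 < a ∧ ∀ᶠ s in atTop, a ≤ f s / s ^ (p - 1))
    (u₀ : ℝ) (hu₀ : 0 < u₀)
    (hf3 : f u₀ = u₀ ^ (p - 1) ∧ (p - 1) * u₀ ^ (p - 2) < f' u₀)
    (K : ℝ) (hK : u₀ ≤ K)
    (ℓ : ℝ) (hℓ : p < ℓ) (hℓsub : p < (N : ℝ) → ℓ < (N : ℝ) * p / ((N : ℝ) - p)) :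
    ∃ ft ft' : ℝ → ℝ,
      (∀ s ∈ Ici (0:ℝ), HasDerivWithinAt ft (ft' s) (Ici 0) s) ∧
      ContinuousOn ft' (Ici 0) ∧
      (∀ s ∈ Ici (0:ℝ), 0 ≤ ft s ∧ 0 ≤ ft' s) ∧
      (∃ L ∈ Ico (0:ℝ) 1,
        Tendsto (fun s => ft s / s ^ (p - 1)) (nhdsWithin 0 (Ioi 0)) (nhds L)) ∧
      (∃ a : ℝ, 1 < a ∧ ∀ᶠ s in atTop, a ≤ ft s / s ^ (p - 1)) ∧
      ft u₀ = u₀ ^ (p - 1) ∧ (p - 1) * u₀ ^ (p - 2) < ft' u₀ ∧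
      Tendsto (fun s => ft s / s ^ (ℓ - 1)) atTop (nhds 1) ∧
      ∀ s ∈ Icc (0:ℝ) K, ft s = f s := by
  exact stmt_5_general (hp.trans hℓ) hℓ hu₀ hK
    (fun s hs => (hC1 s hs.1).mono Icc_subset_Ici_self) (hC1'.mono Icc_subset_Ici_self)
    (fun s hs => hf0 s hs.1) hf1 hf3
end

section
/- Let p > 2 and let N ≥ 1 be an integer. There exists a constant C > 0 such that for every real q ≥ p + 1 and every radial profile solution u ∈ C^1([0,1]) of the Neumann problem −Δ_p u + u^{p−1} = u^{q−1} in the unit ball of ℝ^N with u(r) > 0 for all r ∈ [0,1], u nondecreasing, and u not constant, one has max_{r ∈ [0,1]} u(r) + max_{r ∈ [0,1]} |u'(r)| ≤ C. In particular the bound is uniform in q. -/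
open Real Filter Set

/-!
Along a radial solution of `-Δ_p u + u^(p-1) = f(u)` with `F' = f`, the energy
`E = |u'|^p / p' + F(u) - u^p / p`, where `p'` is the conjugate exponent of `p`, has derivative
`-(N-1)/r * |u'|^p ≤ 0`. It has to be differentiated through `φ_p(u') = |u'|^(p-2) u'`, since `u'`
itself may fail to be differentiable; this works because `|u'|^p = |φ_p(u')|^p'`.

The flux vanishes at both ends, so by Rolle's theorem `u^(p-1) = f(u)` somewhere in `(0, 1)`. For
`f(s) = s^(q-1)` this forces `min u = u(0) ≤ 1`, hence `E(0) ≤ 0` and `E ≤ 0` throughout.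
Therefore `u^(q-p) ≤ q/p ≤ e^((q-p)/p)`, which gives `u ≤ e^(1/p)`, and `(p-1)|u'|^p ≤ u^p`.
-/

section DualityMap

/-- The map `φ_p(x) = |x|^(p-2) x` through which the `p`-Laplacian acts on the derivative of a
radial function; the factor `x` gives it the usual value `0` at `0` also when `p ≤ 2`. -/
noncomputable def dualityMap (p x : ℝ) : ℝ := |x| ^ (p - 2) * x

variable {p q : ℝ}

lemma hasDerivAt_abs_rpow_div (hp : 1 < p) (x : ℝ) :
    HasDerivAt (fun y => |y| ^ p / p) (dualityMap p x) x := by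
  have hp0 : p ≠ 0 := by positivity
  refine ((hasDerivAt_abs_rpow x hp).div_const p).congr_deriv ?_
  rw [dualityMap]
  field_simp

lemma continuous_dualityMap (hp : 1 < p) : Continuous (dualityMap p) := by
  have hderiv : deriv (fun y => |y| ^ p / p) = dualityMap p :=
    deriv_eq fun x => hasDerivAt_abs_rpow_div hp x
  have hC1 : ContDiff ℝ 1 (fun y : ℝ => |y| ^ p / p) := (contDiff_norm_rpow hp).div_const p
  exact hderiv ▸ hC1.continuous_deriv le_rfl

lemma abs_dualityMap (hp : 1 < p) (x : ℝ) : |dualityMap p x| = |x| ^ (p - 1) := by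
  rw [dualityMap, abs_mul, abs_of_nonneg (by positivity : 0 ≤ |x| ^ (p - 2)),
    ← rpow_add_one' (abs_nonneg x) (by linarith)]
  ring_nf

lemma dualityMap_mul_self (hp : 1 < p) (x : ℝ) : dualityMap p x * x = |x| ^ p := by
  rw [dualityMap, mul_assoc, ← abs_mul_abs_self, ← mul_assoc,
    ← rpow_add_one' (abs_nonneg x) (by linarith), ← rpow_add_one' (abs_nonneg x) (by linarith)]
  ring_nf

lemma abs_dualityMap_rpow (hpq : p.HolderConjugate q) (x : ℝ) :
    |dualityMap p x| ^ q = |x| ^ p := by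
  rw [abs_dualityMap hpq.lt, ← rpow_mul (abs_nonneg x), hpq.sub_one_mul_conj]

lemma dualityMap_dualityMap (hpq : p.HolderConjugate q) (x : ℝ) :
    dualityMap q (dualityMap p x) = x := by
  rcases eq_or_ne x 0 with rfl | hx
  · simp [dualityMap]
  have hexp : (p - 1) * (q - 2) + (p - 2) = 0 := by linarith [hpq.mul_eq_add]
  rw [dualityMap, abs_dualityMap hpq.lt, ← rpow_mul (abs_nonneg x), dualityMap, ← mul_assoc,
    ← rpow_add (abs_pos.2 hx), hexp, rpow_zero, one_mul]

end DualityMap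

lemma hasDerivAt_rpow_div {p : ℝ} (hp : 1 ≤ p) (x : ℝ) :
    HasDerivAt (fun y => y ^ p / p) (x ^ (p - 1)) x := by
  have hp0 : p ≠ 0 := by positivity
  refine ((hasDerivAt_rpow_const (Or.inr hp)).div_const p).congr_deriv ?_
  field_simp

lemma le_exp_inv_of_rpow_div_le {p q x : ℝ} (hp : 0 < p) (hpq : p < q) (hx : 0 ≤ x)
    (h : x ^ q / q ≤ x ^ p / p) : x ≤ exp p⁻¹ := by
  rcases hx.eq_or_lt with rfl | hx
  · positivity
  have hq : 0 < q := hp.trans hpq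
  rw [← rpow_le_rpow_iff hx.le (exp_pos _).le (sub_pos.2 hpq)]
  calc x ^ (q - p) = x ^ q / x ^ p := rpow_sub hx q p
    _ ≤ q / p := by
      rw [div_le_div_iff₀ hq hp] at h
      rw [div_le_div_iff₀ (by positivity) hp]
      linarith
    _ = p⁻¹ * (q - p) + 1 := by field_simp; ring
    _ ≤ exp (p⁻¹ * (q - p)) := add_one_le_exp _
    _ = exp p⁻¹ ^ (q - p) := exp_mul _ _

/-- The energy `|u'|^p / p' + F(u) - u^p / p` of a radial profile `u` with derivative `u'`, where
`p'` is the conjugate exponent of `p` and `F` a primitive of the reaction term. -/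
noncomputable def radialEnergy (p : ℝ) (F u u' : ℝ → ℝ) (r : ℝ) : ℝ :=
  |u' r| ^ p / p.conjExponent + F (u r) - u r ^ p / p

namespace IsRadialNeumannSolution

section GeneralReaction

variable {p : ℝ} {N : ℕ} {f F u u' : ℝ → ℝ}

lemma continuousOn (h : IsRadialNeumannSolution p N f u u') : ContinuousOn u (Icc 0 1) :=
  fun r hr => (h.1 r hr).continuousWithinAt

lemma hasDerivAt (h : IsRadialNeumannSolution p N f u u') {r : ℝ} (hr : r ∈ Ioo (0 : ℝ) 1) :
    HasDerivAt u (u' r) r :=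
  (h.1 r (Ioo_subset_Icc_self hr)).hasDerivAt (Icc_mem_nhds hr.1 hr.2)

lemma exists_rpow_eq_reaction (h : IsRadialNeumannSolution p N f u u') (hp : 1 < p) :
    ∃ r ∈ Ioo (0 : ℝ) 1, u r ^ (p - 1) = f (u r) := by
  obtain ⟨-, hu', hu'0, hu'1, hflux⟩ := h
  have hcont : ContinuousOn (flux p N u') (Icc 0 1) :=
    (continuous_pow (N - 1)).continuousOn.mul ((continuous_dualityMap hp).comp_continuousOn hu')
  have hends : flux p N u' 0 = flux p N u' 1 := by simp [flux, hu'0, hu'1]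
  obtain ⟨r, hr, hzero⟩ := exists_hasDerivAt_eq_zero zero_lt_one hcont hends hflux
  exact ⟨r, hr, sub_eq_zero.1 ((mul_eq_zero.1 hzero).resolve_left (pow_pos hr.1 _).ne')⟩

lemma hasDerivAt_dualityMap (h : IsRadialNeumannSolution p N f u u') {r : ℝ}
    (hr : r ∈ Ioo (0 : ℝ) 1) :
    HasDerivAt (fun s => dualityMap p (u' s))
      (u r ^ (p - 1) - f (u r) - (N - 1 : ℕ) / r * dualityMap p (u' r)) r := by
  obtain ⟨-, -, -, -, hflux⟩ := h
  have hr0 : r ≠ 0 := hr.1.ne'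
  have hquot : (fun s => dualityMap p (u' s)) =ᶠ[nhds r] fun s => flux p N u' s / s ^ (N - 1) := by
    filter_upwards [Ioi_mem_nhds hr.1] with s hs
    exact (mul_div_cancel_left₀ _ (pow_pos hs _).ne').symm
  refine (((hflux r hr).div (hasDerivAt_pow (N - 1) r)
    (pow_ne_zero _ hr0)).congr_of_eventuallyEq hquot).congr_deriv ?_
  rw [show flux p N u' r = r ^ (N - 1) * dualityMap p (u' r) from rfl]
  rcases N - 1 with _ | n
  · simp
  · rw [Nat.add_sub_cancel]
    field_simp
    ring

lemma hasDerivAt_radialEnergy (h : IsRadialNeumannSolution p N f u u') (hp : 1 < p) {r : ℝ}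
    (hF : HasDerivAt F (f (u r)) (u r)) (hr : r ∈ Ioo (0 : ℝ) 1) :
    HasDerivAt (radialEnergy p F u u') (-((N - 1 : ℕ) / r * |u' r| ^ p)) r := by
  have hpp' : p.HolderConjugate p.conjExponent := .conjExponent hp
  have hkinetic : HasDerivAt (fun s => |u' s| ^ p / p.conjExponent)
      (u' r * (u r ^ (p - 1) - f (u r) - (N - 1 : ℕ) / r * dualityMap p (u' r))) r := by
    have hcomp := (hasDerivAt_abs_rpow_div hpp'.symm.lt _).comp r (h.hasDerivAt_dualityMap hr)
    simpa only [Function.comp_def, abs_dualityMap_rpow hpp', dualityMap_dualityMap hpp'] using hcomp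
  have hpower : HasDerivAt (fun s => u s ^ p / p) (u r ^ (p - 1) * u' r) r :=
    (hasDerivAt_rpow_div hp.le (u r)).comp r (h.hasDerivAt hr)
  refine ((hkinetic.add (hF.comp r (h.hasDerivAt hr))).sub hpower).congr_deriv ?_
  rw [← dualityMap_mul_self hp]
  ring

lemma continuousOn_radialEnergy (h : IsRadialNeumannSolution p N f u u') (hp : 0 ≤ p)
    (hF : ∀ r ∈ Icc (0 : ℝ) 1, ContinuousAt F (u r)) :
    ContinuousOn (radialEnergy p F u u') (Icc 0 1) := by
  have hkinetic : ContinuousOn (fun r => |u' r| ^ p) (Icc 0 1) :=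
    h.2.1.abs.rpow_const fun _ _ => Or.inr hp
  have hreaction : ContinuousOn (fun r => F (u r)) (Icc 0 1) :=
    fun r hr => (hF r hr).comp_continuousWithinAt (h.continuousOn r hr)
  have hpower : ContinuousOn (fun r => u r ^ p) (Icc 0 1) :=
    h.continuousOn.rpow_const fun _ _ => Or.inr hp
  exact ((hkinetic.div_const _).add hreaction).sub (hpower.div_const _)

lemma antitoneOn_radialEnergy (h : IsRadialNeumannSolution p N f u u') (hp : 1 < p)
    (hF : ∀ r ∈ Icc (0 : ℝ) 1, HasDerivAt F (f (u r)) (u r)) :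
    AntitoneOn (radialEnergy p F u u') (Icc 0 1) := by
  have hcont := h.continuousOn_radialEnergy (by positivity) fun r hr => (hF r hr).continuousAt
  refine antitoneOn_of_hasDerivWithinAt_nonpos (convex_Icc 0 1) hcont
    (f' := fun r => -((N - 1 : ℕ) / r * |u' r| ^ p)) ?_ ?_ <;> rw [interior_Icc]
  · exact fun r hr =>
      (h.hasDerivAt_radialEnergy hp (hF r (Ioo_subset_Icc_self hr)) hr).hasDerivWithinAt
  · intro r hr
    have hr0 : 0 < r := hr.1
    exact neg_nonpos.2 (by positivity)

end GeneralReaction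

section PowerReaction

variable {p q : ℝ} {N : ℕ} {u u' : ℝ → ℝ} {r : ℝ}

lemma apply_zero_le_one (h : IsRadialNeumannSolution p N (fun s => s ^ (q - 1)) u u') (hp : 1 < p)
    (hpq : p < q) (hmin : IsMinOn u (Icc 0 1) 0) : u 0 ≤ 1 := by
  obtain ⟨r, hr, heq⟩ := h.exists_rpow_eq_reaction hp
  by_contra! hlt
  have hur : 1 < u r := hlt.trans_le (hmin (Ioo_subset_Icc_self hr))
  exact (rpow_lt_rpow_of_exponent_lt hur (sub_lt_sub_right hpq 1)).ne heq

lemma radialEnergy_nonpos (h : IsRadialNeumannSolution p N (fun s => s ^ (q - 1)) u u')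
    (hp : 1 < p) (hpq : p < q) (hu0 : 0 ≤ u 0) (hu1 : u 0 ≤ 1) (hr : r ∈ Icc (0 : ℝ) 1) :
    radialEnergy p (fun s => s ^ q / q) u u' r ≤ 0 := by
  have hp0 : 0 < p := by positivity
  have hanti := h.antitoneOn_radialEnergy hp
    fun s _ => hasDerivAt_rpow_div (hp.trans hpq).le (u s)
  have hcentre : u 0 ^ q / q ≤ u 0 ^ p / p :=
    div_le_div₀ (by positivity) (rpow_le_rpow_of_exponent_ge' hu0 hu1 hp0.le hpq.le) hp0 hpq.le
  calc radialEnergy p (fun s => s ^ q / q) u u' r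
      ≤ radialEnergy p (fun s => s ^ q / q) u u' 0 :=
        hanti (left_mem_Icc.2 zero_le_one) hr hr.1
    _ = u 0 ^ q / q - u 0 ^ p / p := by simp [radialEnergy, h.2.2.1, zero_rpow hp0.ne']
    _ ≤ 0 := sub_nonpos.2 hcentre

end PowerReaction

end IsRadialNeumannSolution

section NonposEnergy

variable {p q : ℝ} {u u' : ℝ → ℝ} {r : ℝ}

lemma le_exp_inv_of_radialEnergy_nonpos (hp : 1 < p) (hpq : p < q) (hu : 0 ≤ u r)
    (hE : radialEnergy p (fun s => s ^ q / q) u u' r ≤ 0) : u r ≤ exp p⁻¹ := by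
  have hkinetic : 0 ≤ |u' r| ^ p / p.conjExponent :=
    div_nonneg (by positivity) (HolderConjugate.conjExponent hp).symm.nonneg
  rw [radialEnergy] at hE
  exact le_exp_inv_of_rpow_div_le (by positivity) hpq hu (by linarith)

lemma abs_le_div_of_radialEnergy_nonpos {F : ℝ → ℝ} (hp : 1 < p) (hu : 0 ≤ u r) (hF : 0 ≤ F (u r))
    (hE : radialEnergy p F u u' r ≤ 0) : |u' r| ≤ u r / (p - 1) ^ p⁻¹ := by
  have hp0 : 0 < p := by positivity
  have hp1 : 0 < p - 1 := sub_pos.2 hp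
  have hkinetic : |u' r| ^ p / p.conjExponent ≤ u r ^ p / p := by
    rw [radialEnergy] at hE
    linarith
  rw [← rpow_le_rpow_iff (abs_nonneg _) (by positivity) hp0, div_rpow hu (by positivity),
    rpow_inv_rpow hp1.le hp0.ne', le_div_iff₀ hp1]
  calc |u' r| ^ p * (p - 1) = |u' r| ^ p / p.conjExponent * p := by
        rw [← (HolderConjugate.conjExponent hp).div_conj_eq_sub_one]
        ring
    _ ≤ u r ^ p := (le_div_iff₀ hp0).1 hkinetic

end NonposEnergy

theorem stmt_13_general {p q : ℝ} (hp : 1 < p) (hpq : p < q) {n : ℕ} {u u' : ℝ → ℝ}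
    (h : IsRadialNeumannSolution p (n + 1) (fun s => s ^ (q - 1)) u u') (hu0 : 0 ≤ u 0)
    (hmin : IsMinOn u (Icc 0 1) 0) {r s : ℝ} (hr : r ∈ Icc (0 : ℝ) 1) (hs : s ∈ Icc (0 : ℝ) 1) :
    u r + |u' s| ≤ exp p⁻¹ + exp p⁻¹ / (p - 1) ^ p⁻¹ := by
  have hu1 : u 0 ≤ 1 := h.apply_zero_le_one hp hpq hmin
  have hnonneg {x : ℝ} (hx : x ∈ Icc (0 : ℝ) 1) : 0 ≤ u x := hu0.trans (hmin hx)
  have hE {x : ℝ} (hx : x ∈ Icc (0 : ℝ) 1) := h.radialEnergy_nonpos hp hpq hu0 hu1 hx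
  have hle {x : ℝ} (hx : x ∈ Icc (0 : ℝ) 1) : u x ≤ exp p⁻¹ :=
    le_exp_inv_of_radialEnergy_nonpos hp hpq (hnonneg hx) (hE hx)
  have hF : 0 ≤ u s ^ q / q := div_nonneg (rpow_nonneg (hnonneg hs) q) (by linarith)
  calc u r + |u' s| ≤ exp p⁻¹ + u s / (p - 1) ^ p⁻¹ :=
        add_le_add (hle hr) (abs_le_div_of_radialEnergy_nonpos hp (hnonneg hs) hF (hE hs))
    _ ≤ exp p⁻¹ + exp p⁻¹ / (p - 1) ^ p⁻¹ :=
        add_le_add_right (div_le_div_of_nonneg_right (hle hs)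
          (rpow_nonneg (sub_nonneg.2 hp.le) _)) _

theorem stmt_13 (p : ℝ) (hp : 2 < p) (N : ℕ) (hN : 1 ≤ N) :
    ∃ C : ℝ, 0 < C ∧ ∀ q : ℝ, p + 1 ≤ q → ∀ u u' : ℝ → ℝ,
      IsRadialNeumannSolution p N (fun s => s ^ (q - 1)) u u' →
      (∀ r ∈ Icc (0:ℝ) 1, 0 < u r) →
      MonotoneOn u (Icc (0:ℝ) 1) →
      ¬ (∀ r ∈ Icc (0:ℝ) 1, u r = u 0) →
      ∀ r ∈ Icc (0:ℝ) 1, ∀ s ∈ Icc (0:ℝ) 1, u r + |u' s| ≤ C := by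
  obtain ⟨n, rfl⟩ := Nat.exists_eq_add_of_le' hN
  have hp1 : 0 < p - 1 := by linarith
  refine ⟨exp p⁻¹ + exp p⁻¹ / (p - 1) ^ p⁻¹, by positivity, ?_⟩
  intro q hq u u' h hpos hmono _ r hr s hs
  have h0 : (0 : ℝ) ∈ Icc (0 : ℝ) 1 := left_mem_Icc.2 zero_le_one
  exact stmt_13_general (by linarith) (by linarith) h (hpos 0 h0).le
    (fun x hx => hmono h0 hx hx.1) hr hs
end
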